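/- arXiv:1306.3910 — 2 statements merged into one kernel-verified Lean document; each statement's English description precedes it below -/
import Mathlib

section
/- Let X be a finite set of n points in Euclidean 4-space with all pairwise distances at most 1, and assume every point of X is at distance exactly 1 from at least one other point of X. Let e be the number of unordered pairs of points of X at distance exactly 1, and let t be the number of 3-element subsets of X with all three pairwise distances equal to 1. Then 3t ≤ 4e − 2n. -/
attribute [local instance] Classical.propDecidable

/-- The set of unordered pairs of points of `X` at distance exactly `1`. -/
noncomputable def unitPairs (X : Finset (EuclideanSpace ℝ (Fin 4))) :
    Finset (Finset (EuclideanSpace ℝ (Fin 4))) :=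
  (X.powersetCard 2).filter (fun s => ∀ x ∈ s, ∀ y ∈ s, x ≠ y → ‖x - y‖ = 1)

/-- The set of 3-element subsets of `X` with all three pairwise distances equal to `1`. -/
noncomputable def unitTriangles (X : Finset (EuclideanSpace ℝ (Fin 4))) :
    Finset (Finset (EuclideanSpace ℝ (Fin 4))) :=
  (X.powersetCard 3).filter (fun s => ∀ x ∈ s, ∀ y ∈ s, x ≠ y → ‖x - y‖ = 1)



namespace VZ

def cone {V Z : Type*} [AddCommGroup V] [Module ℝ V] [Fintype Z] (v : Z → V) (m : Z → Prop) :
    Set V :=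
  {w | ∃ c : Z → ℝ, (∀ z, 0 ≤ c z) ∧ (∀ z, ¬ m z → c z = 0) ∧ w = ∑ z, c z • v z}

section cone
variable {V Z : Type*} [AddCommGroup V] [Module ℝ V] [Fintype Z] {v : Z → V} {m : Z → Prop}

lemma cone_add {a b : V} (ha : a ∈ cone v m) (hb : b ∈ cone v m) : a + b ∈ cone v m := by
  obtain ⟨c, h1, h2, rfl⟩ := ha
  obtain ⟨d, h3, h4, rfl⟩ := hb
  refine ⟨fun z => c z + d z, fun z => add_nonneg (h1 z) (h3 z), fun z hz => ?_, ?_⟩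
  · simp [h2 z hz, h4 z hz]
  · simp [add_smul, Finset.sum_add_distrib]

lemma cone_smul {a : V} {s : ℝ} (hs : 0 ≤ s) (ha : a ∈ cone v m) : s • a ∈ cone v m := by
  obtain ⟨c, h1, h2, rfl⟩ := ha
  refine ⟨fun z => s * c z, fun z => mul_nonneg hs (h1 z), fun z hz => ?_, ?_⟩
  · simp [h2 z hz]
  · simp [Finset.smul_sum, mul_smul]

lemma cone_gen {z : Z} (hz : m z) : v z ∈ cone v m := by
  refine ⟨fun y => if y = z then 1 else 0, fun y => by positivity, fun y hy => ?_, ?_⟩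
  · have : y ≠ z := fun h => hy (h ▸ hz)
    simp [this]
  · simp

lemma cone_nonneg {f : V →ₗ[ℝ] ℝ} (hf : ∀ z, m z → 0 ≤ f (v z)) {w : V} (hw : w ∈ cone v m) :
    0 ≤ f w := by
  obtain ⟨c, h1, h2, rfl⟩ := hw
  rw [map_sum]
  refine Finset.sum_nonneg fun z _ => ?_
  rw [map_smul, smul_eq_mul]
  by_cases hz : m z
  · exact mul_nonneg (h1 z) (hf z hz)
  · simp [h2 z hz]

/-- if f is positive on all generators satisfying m except s and f w ≤ 0, then w is a multiple -/
lemma cone_eq {f : V →ₗ[ℝ] ℝ} {s : Z} (hf : ∀ z, m z → z ≠ s → 0 < f (v z)) (hs : 0 ≤ f (v s))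
    {w : V} (hw : w ∈ cone v m) (hw0 : f w ≤ 0) : ∃ c : ℝ, 0 ≤ c ∧ w = c • v s := by
  obtain ⟨c, h1, h2, rfl⟩ := hw
  refine ⟨c s, h1 s, ?_⟩
  rw [map_sum] at hw0
  have hnn : ∀ z ∈ Finset.univ, 0 ≤ f (c z • v z) := fun z _ => by
    rw [map_smul, smul_eq_mul]
    by_cases hz : m z
    · by_cases hzs : z = s
      · subst hzs; exact mul_nonneg (h1 _) hs
      · exact mul_nonneg (h1 z) (hf z hz hzs).le
    · simp [h2 z hz]
  have h0 := (Finset.sum_eq_zero_iff_of_nonneg hnn).1 (le_antisymm hw0 (Finset.sum_nonneg hnn))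
  rw [Finset.sum_eq_single s]
  · intro z _ hzs
    have := h0 z (Finset.mem_univ _)
    rw [map_smul, smul_eq_mul] at this
    by_cases hz : m z
    · have h3 := hf z hz hzs
      rcases mul_eq_zero.1 this with h | h
      · simp [h]
      · exact absurd h h3.ne'
    · simp [h2 z hz]
  · simp

lemma cone_zero {f : V →ₗ[ℝ] ℝ} (hf : ∀ z, m z → 0 < f (v z))
    {w : V} (hw : w ∈ cone v m) (hw0 : f w ≤ 0) : w = 0 := by
  obtain ⟨c, h1, h2, rfl⟩ := hw
  rw [map_sum] at hw0
  have hnn : ∀ z ∈ Finset.univ, 0 ≤ f (c z • v z) := fun z _ => by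
    rw [map_smul, smul_eq_mul]
    by_cases hz : m z
    · exact mul_nonneg (h1 z) (hf z hz).le
    · simp [h2 z hz]
  have h0 := (Finset.sum_eq_zero_iff_of_nonneg hnn).1 (le_antisymm hw0 (Finset.sum_nonneg hnn))
  refine Finset.sum_eq_zero fun z _ => ?_
  have := h0 z (Finset.mem_univ _)
  rw [map_smul, smul_eq_mul] at this
  by_cases hz : m z
  · rcases mul_eq_zero.1 this with h | h
    · simp [h]
    · exact absurd h (hf z hz).ne'
  · simp [h2 z hz]

end cone

abbrev R3 := ℝ × ℝ × ℝ

/-- oriented area of the horizontal projections -/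
def dt (u w : R3) : ℝ := u.1 * w.2.1 - u.2.1 * w.1

def dtl (s : ℝ) (u : R3) : R3 →ₗ[ℝ] ℝ where
  toFun w := s * dt u w
  map_add' a b := by simp [dt]; ring
  map_smul' c a := by simp [dt]; ring

structure Sw (Z ι : Type*) [Fintype Z] where
  v : Z → R3
  r : Z → ι
  b : Z → ι
  col : ι → Bool
  colr : ∀ z, col (r z) = true
  colb : ∀ z, col (b z) = false
  inj : ∀ z z', r z = r z' → b z = b z' → z = z'
  /-- pole sets -/
  P : ℝ → ι
  hP : P 1 ≠ P (-1)
  K2 : ∀ A B, A ≠ B → ∀ w, w ∈ cone v (fun z => r z = A ∨ b z = A) →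
    w ∈ cone v (fun z => r z = B ∨ b z = B) → w ≠ 0 →
    ∃ z, (r z = A ∨ b z = A) ∧ (r z = B ∨ b z = B) ∧ ∃ c : ℝ, 0 < c ∧ w = c • v z
  ext : ∀ A z, (r z = A ∨ b z = A) → ∀ w1 w2, w1 ∈ cone v (fun z => r z = A ∨ b z = A) →
    w2 ∈ cone v (fun z => r z = A ∨ b z = A) → ∀ c : ℝ, w1 + w2 = c • v z →
    ∃ d : ℝ, 0 ≤ d ∧ w1 = d • v z
  pt : ∀ A w, w ∈ cone v (fun z => r z = A ∨ b z = A) →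
    -w ∈ cone v (fun z => r z = A ∨ b z = A) → w = 0
  pole : ∀ t : ℝ, (t = 1 ∨ t = -1) → ∀ w : R3, ∃ s : ℝ, 0 < s ∧
    w + (0, 0, t * s) ∈ cone v (fun z => r z = P t ∨ b z = P t)
  npole : ∀ z, ¬ ((r z = P 1 ∨ b z = P 1) ∧ (r z = P (-1) ∨ b z = P (-1)))
  gen : ∀ z z', z ≠ z' → dt (v z) (v z') = 0 → ∃ c : ℝ, 0 < c ∧ v z' = -(c • v z)
  xy : ∀ z, (v z).1 ≠ 0 ∨ (v z).2.1 ≠ 0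
  ne : ∀ A, ∃ z, r z = A ∨ b z = A
  deg : ∀ A z, (r z = A ∨ b z = A) → ∃ z', z' ≠ z ∧ (r z' = A ∨ b z' = A)

namespace Sw
variable {Z ι : Type*} [Fintype Z] (S : Sw Z ι)

def mem (z : Z) (A : ι) : Prop := S.r z = A ∨ S.b z = A

def K (A : ι) : Set R3 := cone S.v (fun z => S.r z = A ∨ S.b z = A)

def Above (t : ℝ) (A B : ι) : Prop :=
  ∃ a ∈ S.K A, ∃ b ∈ S.K B, a.1 = b.1 ∧ a.2.1 = b.2.1 ∧ (a.1 ≠ 0 ∨ a.2.1 ≠ 0) ∧ 0 < t * (a.2.2 - b.2.2)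

def Has (A : ι) (y : Z) : Prop := ∃ a ∈ S.K A, a.1 = (S.v y).1 ∧ a.2.1 = (S.v y).2.1

def Hi (t : ℝ) (A : ι) (y : Z) : Prop :=
  ∃ a ∈ S.K A, a.1 = (S.v y).1 ∧ a.2.1 = (S.v y).2.1 ∧ 0 < t * (a.2.2 - (S.v y).2.2)

def IsSt (s : ℝ) (y : Z) (A : ι) : Prop :=
  S.mem y A ∧ A ≠ S.P 1 ∧ A ≠ S.P (-1) ∧ ∀ z, S.mem z A → 0 ≤ s * dt (S.v y) (S.v z)

variable {S}

lemma K_add {A : ι} {a b : R3} (ha : a ∈ S.K A) (hb : b ∈ S.K A) : a + b ∈ S.K A := cone_add ha hb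
lemma K_smul {A : ι} {a : R3} {c : ℝ} (hc : 0 ≤ c) (ha : a ∈ S.K A) : c • a ∈ S.K A :=
  cone_smul hc ha
lemma K_gen {A : ι} {z : Z} (hz : S.mem z A) : S.v z ∈ S.K A :=
  cone_gen (m := fun z => S.r z = A ∨ S.b z = A) hz

lemma v_ne (z : Z) : S.v z ≠ 0 := by
  intro h
  have := S.xy z
  simp [h] at this

lemma rb_ne (z z' : Z) : S.r z ≠ S.b z' := by
  intro h
  have h1 := S.colr z
  rw [h, S.colb] at h1
  cases h1

/-- two contacts at the same longitude are equal -/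
lemma eq_of_long {z y : Z} {c : ℝ} (hc : 0 < c) (h1 : c * (S.v z).1 = (S.v y).1)
    (h2 : c * (S.v z).2.1 = (S.v y).2.1) : z = y := by
  by_contra hne
  obtain ⟨d, hd, h⟩ := S.gen z y hne (by unfold dt; rw [← h1, ← h2]; ring)
  have e1 : (S.v y).1 = -(d * (S.v z).1) := by rw [h]; simp
  have e2 : (S.v y).2.1 = -(d * (S.v z).2.1) := by rw [h]; simp
  have f1 : (c + d) * (S.v z).1 = 0 := by linarith
  have f2 : (c + d) * (S.v z).2.1 = 0 := by linarith
  have : c + d ≠ 0 := by positivity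
  rcases S.xy z with h | h
  · exact (mul_ne_zero this h) f1
  · exact (mul_ne_zero this h) f2

/-- points common to two sets at the longitude of `y` -/
lemma common {A B : ι} (hAB : A ≠ B) {w : R3} (hA : w ∈ S.K A) (hB : w ∈ S.K B) {y : Z}
    (h1 : w.1 = (S.v y).1) (h2 : w.2.1 = (S.v y).2.1) : S.mem y A ∧ S.mem y B ∧ w = S.v y := by
  have hw : w ≠ 0 := by
    rintro rfl
    have := S.xy y
    rw [← h1, ← h2] at this
    simp at this
  obtain ⟨z, hzA, hzB, c, hc, rfl⟩ := S.K2 A B hAB w hA hB hw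
  have : z = y := eq_of_long hc (by simpa using h1) (by simpa using h2)
  subst this
  refine ⟨hzA, hzB, ?_⟩
  have hc1 : c = 1 := by
    simp only [Prod.smul_fst, Prod.smul_snd, smul_eq_mul] at h1 h2
    rcases S.xy z with h | h
    · exact (mul_eq_right₀ h).1 h1
    · exact (mul_eq_right₀ h).1 h2
  simp [hc1]

lemma mem_of_K {A : ι} {y : Z} (h : S.v y ∈ S.K A) : S.mem y A := by
  by_cases hA : S.r y = A
  · exact Or.inl hA
  · exact (common (Ne.symm hA) h (K_gen (Or.inl rfl)) rfl rfl).1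

lemma above_antisymm {t : ℝ} {A B : ι} (hAB : A ≠ B) (h1 : S.Above t A B) (h2 : S.Above t B A) :
    False := by
  obtain ⟨a1, ha1, b1, hb1, e1, e2, en, e3⟩ := h1
  obtain ⟨b2, hb2, a2, ha2, f1, f2, fn, f3⟩ := h2
  set d1 := t * (a1.2.2 - b1.2.2) with hd1
  set d2 := t * (b2.2.2 - a2.2.2) with hd2
  have hw : d2 • a1 + d1 • a2 = d2 • b1 + d1 • b2 := by
    ext
    · simp [e1, f1]
    · simp [e2, f2]
    · simp [hd1, hd2]; ring
  have hA : d2 • a1 + d1 • a2 ∈ S.K A := K_add (K_smul f3.le ha1) (K_smul e3.le ha2)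
  have hB : d2 • a1 + d1 • a2 ∈ S.K B := hw ▸ K_add (K_smul f3.le hb1) (K_smul e3.le hb2)
  have hne : d2 • a1 + d1 • a2 ≠ 0 := by
    intro h0
    have h3 : -(d2 • a1) ∈ S.K A := by
      rw [neg_eq_of_add_eq_zero_right h0]; exact K_smul e3.le ha2
    have := S.pt A _ (K_smul f3.le ha1) h3
    have h4 : a1 = 0 := (smul_eq_zero.1 this).resolve_left f3.ne'
    simp [h4] at en
  obtain ⟨z, hzA, hzB, c, hc, hz⟩ := S.K2 A B hAB _ hA hB hne
  obtain ⟨p, hp, hp'⟩ := S.ext A z hzA _ _ (K_smul f3.le ha1) (K_smul e3.le ha2) c hz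
  rw [hw] at hz
  obtain ⟨q, hq, hq'⟩ := S.ext B z hzB _ _ (K_smul f3.le hb1) (K_smul e3.le hb2) c hz
  have g1 : d2 * a1.1 = p * (S.v z).1 := by simpa using congrArg Prod.fst hp'
  have g2 : d2 * a1.2.1 = p * (S.v z).2.1 := by simpa using congrArg (fun w => w.2.1) hp'
  have g3 : d2 * a1.2.2 = p * (S.v z).2.2 := by simpa using congrArg (fun w => w.2.2) hp'
  have k1 : d2 * b1.1 = q * (S.v z).1 := by simpa using congrArg Prod.fst hq'
  have k2 : d2 * b1.2.1 = q * (S.v z).2.1 := by simpa using congrArg (fun w => w.2.1) hq'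
  have k3 : d2 * b1.2.2 = q * (S.v z).2.2 := by simpa using congrArg (fun w => w.2.2) hq'
  have hpq : p = q := by
    rw [e1, k1] at g1
    rw [e2, k2] at g2
    rcases S.xy z with h | h
    · exact (mul_right_cancel₀ h g1).symm
    · exact (mul_right_cancel₀ h g2).symm
  rw [hpq, ← k3] at g3
  have := mul_left_cancel₀ f3.ne' g3
  rw [hd1, this] at e3
  simp at e3

lemma above_neg {t : ℝ} {A B : ι} (h : S.Above t A B) : S.Above (-t) B A := by
  obtain ⟨a, ha, b, hb, e1, e2, e3, e4⟩ := h
  exact ⟨b, hb, a, ha, e1.symm, e2.symm, by rwa [← e1, ← e2], by linarith⟩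

lemma above_neg' {t : ℝ} {A B : ι} (h : S.Above (-t) A B) : S.Above t B A := by
  simpa using above_neg h

lemma pole_K {t : ℝ} (ht : t = 1 ∨ t = -1) : ((0, 0, t) : R3) ∈ S.K (S.P t) := by
  obtain ⟨s, hs, h⟩ := S.pole t ht 0
  have := K_smul (S := S) (inv_nonneg.2 hs.le) h
  convert this using 1
  ext <;> simp
  field_simp

lemma pole_only {t : ℝ} (ht : t = 1 ∨ t = -1) {A : ι} {s : ℝ} (hs : 0 < s)
    (h : ((0, 0, t * s) : R3) ∈ S.K A) : A = S.P t := by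
  by_contra hA
  have h2 : ((0, 0, t * s) : R3) ∈ S.K (S.P t) := by
    have := K_smul (S := S) hs.le (pole_K (S := S) ht)
    convert this using 1
    ext <;> simp [mul_comm]
  have h0 : ((0, 0, t * s) : R3) ≠ 0 := by
    intro h
    have := congrArg (fun w : R3 => w.2.2) h
    simp at this
    rcases this with h | h
    · rcases ht with h' | h' <;> simp [h'] at h
    · exact hs.ne' h
  obtain ⟨z, _, _, c, hc, hz⟩ := S.K2 A _ hA _ h h2 h0
  have e1 : c * (S.v z).1 = 0 := by simpa using (congrArg (fun w : R3 => w.1) hz).symm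
  have e2 : c * (S.v z).2.1 = 0 := by simpa using (congrArg (fun w : R3 => w.2.1) hz).symm
  rcases S.xy z with h | h
  · exact mul_ne_zero hc.ne' h e1
  · exact mul_ne_zero hc.ne' h e2

/-- non-pole sets have pointed horizontal projection -/
lemma proj_pt {A : ι} (h1 : A ≠ S.P 1) (h2 : A ≠ S.P (-1)) {w : R3} (hw : w ∈ S.K A)
    (e1 : w.1 = 0) (e2 : w.2.1 = 0) : w = 0 := by
  rcases lt_trichotomy w.2.2 0 with h | h | h
  · exact absurd (pole_only (S := S) (t := -1) (Or.inr rfl) (s := -w.2.2) (by linarith)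
      (by convert hw using 1; ext <;> simp [e1, e2])) h2
  · ext <;> simp [e1, e2, h]
  · exact absurd (pole_only (S := S) (t := 1) (Or.inl rfl) (s := w.2.2) (by linarith)
      (by convert hw using 1; ext <;> simp [e1, e2])) h1

lemma proj_sum {A : ι} (h1 : A ≠ S.P 1) (h2 : A ≠ S.P (-1)) {w u : R3} (hw : w ∈ S.K A)
    (hu : u ∈ S.K A) (e1 : w.1 + u.1 = 0) (e2 : w.2.1 + u.2.1 = 0) : w = 0 := by
  have := proj_pt h1 h2 (K_add hw hu) (by simpa using e1) (by simpa using e2)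
  refine S.pt A _ hw ?_
  rw [neg_eq_of_add_eq_zero_right this]; exact hu

lemma dt_trans {A : ι} (h1 : A ≠ S.P 1) (h2 : A ≠ S.P (-1)) {s : ℝ} {a b c : R3}
    (ha : a ∈ S.K A) (hb : b ∈ S.K A) (hc : c ∈ S.K A) (hab : 0 < s * dt a b)
    (hbc : 0 < s * dt b c) : 0 < s * dt a c := by
  by_contra hac
  push Not at hac
  have key := proj_sum h1 h2 (w := (s * dt b c) • a)
    (u := (s * dt c a) • b + (s * dt a b) • c) (K_smul hbc.le ha)
    (K_add (K_smul (by unfold dt at *; linarith) hb) (K_smul hab.le hc))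
    (by simp [dt]; ring) (by simp [dt]; ring)
  have := (smul_eq_zero.1 key).resolve_left hbc.ne'
  simp [this, dt] at hab

lemma dt_pos_of_ne {A : ι} {s : ℝ} (hs : s ≠ 0) {y z : Z}
    (hy : S.mem y A) (hz : S.mem z A) (hne : y ≠ z) (h : 0 ≤ s * dt (S.v y) (S.v z)) :
    0 < s * dt (S.v y) (S.v z) := by
  refine lt_of_le_of_ne h fun h0 => ?_
  have h0 := (mul_eq_zero.1 h0.symm).resolve_left hs
  obtain ⟨c, hc, he⟩ := S.gen y z hne h0
  have := S.pt A _ (K_smul hc.le (K_gen hy)) (by rw [← he]; exact K_gen hz)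
  exact (smul_ne_zero hc.ne' (v_ne y)) this

lemma exists_st [Finite ι] {A : ι} (h1 : A ≠ S.P 1) (h2 : A ≠ S.P (-1)) {s : ℝ} (hs : s ≠ 0) :
    ∃ y, S.IsSt s y A := by
  let T := {z : Z // S.mem z A}
  let R : T → T → Prop := fun a b => 0 < s * dt (S.v a) (S.v b)
  haveI : Std.Irrefl R := ⟨fun a h => by simp only [R, dt] at h; ring_nf at h; exact lt_irrefl _ h⟩
  haveI : IsTrans T R := ⟨fun a b c hab hbc =>
    dt_trans h1 h2 (K_gen a.2) (K_gen b.2) (K_gen c.2) hab hbc⟩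
  have wf : WellFounded R := Finite.wellFounded_of_trans_of_irrefl R
  obtain ⟨z0, hz0⟩ := S.ne A
  obtain ⟨y, -, hy⟩ := wf.has_min Set.univ ⟨(⟨z0, hz0⟩ : T), trivial⟩
  refine ⟨y.1, y.2, h1, h2, fun z hz => ?_⟩
  by_contra hlt
  push Not at hlt
  apply hy ⟨z, hz⟩ trivial
  simp only [R]
  unfold dt at *; linarith

lemma st_nonneg {s : ℝ} {y : Z} {A : ι} (h : S.IsSt s y A) {w : R3} (hw : w ∈ S.K A) :
    0 ≤ s * dt (S.v y) w :=
  cone_nonneg (f := dtl s (S.v y)) (fun z hz => h.2.2.2 z hz) hw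

lemma st_eq {s : ℝ} (hs : s ≠ 0) {y : Z} {A : ι} (h : S.IsSt s y A) {w : R3} (hw : w ∈ S.K A)
    (h0 : s * dt (S.v y) w ≤ 0) : ∃ c : ℝ, 0 ≤ c ∧ w = c • S.v y := by
  refine cone_eq (f := dtl s (S.v y)) (fun z hz hzy => ?_) ?_ hw h0
  · exact dt_pos_of_ne hs h.1 hz (Ne.symm hzy) (h.2.2.2 z hz)
  · exact h.2.2.2 y h.1

lemma st_not_hi {s : ℝ} (hs : s ≠ 0) {y : Z} {A : ι} (h : S.IsSt s y A) {t : ℝ}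
    (hh : S.Hi t A y) : False := by
  obtain ⟨a, ha, e1, e2, e3⟩ := hh
  obtain ⟨c, hc, rfl⟩ := st_eq hs h ha (by unfold dt; rw [e1, e2]; ring_nf; rfl)
  simp only [Prod.smul_fst, Prod.smul_snd, smul_eq_mul] at e1 e2 e3
  have hc1 : c = 1 := by
    rcases S.xy y with h | h
    · exact (mul_eq_right₀ h).1 e1
    · exact (mul_eq_right₀ h).1 e2
  simp [hc1] at e3

lemma hi_of_has {t : ℝ} (ht : t = 1 ∨ t = -1) {A : ι} {y : Z} (h : S.Has A y)
    (hm : ¬ S.mem y A) : S.Hi t A y ∨ S.Hi (-t) A y := by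
  obtain ⟨a, ha, e1, e2⟩ := h
  rcases lt_trichotomy (t * (a.2.2 - (S.v y).2.2)) 0 with h | h | h
  · exact Or.inr ⟨a, ha, e1, e2, by linarith⟩
  · exfalso
    apply hm
    apply mem_of_K
    have : a = S.v y := by
      have : a.2.2 = (S.v y).2.2 := by rcases ht with rfl | rfl <;> linarith
      ext
      · exact e1
      · exact e2
      · exact this
    rwa [← this]
  · exact Or.inl ⟨a, ha, e1, e2, h⟩

lemma hi_excl {t : ℝ} {A : ι} {y : Z} (h1 : S.Hi t A y) (h2 : S.Hi (-t) A y) : False := by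
  obtain ⟨a, ha, e1, e2, e3⟩ := h1
  obtain ⟨b, hb, f1, f2, f3⟩ := h2
  set p := t * (a.2.2 - (S.v y).2.2) with hp
  set q := -t * (b.2.2 - (S.v y).2.2) with hq
  have hs : q • a + p • b = (p + q) • S.v y := by
    ext
    · simp [e1, f1]; ring
    · simp [e2, f2]; ring
    · simp [hp, hq]; ring
  have hK := K_add (K_smul f3.le ha) (K_smul e3.le hb)
  have hm : S.mem y A := by
    apply mem_of_K
    rw [hs] at hK
    have hpq : p + q ≠ 0 := by positivity
    have := K_smul (S := S) (inv_nonneg.2 (add_pos e3 f3).le) hK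
    rwa [smul_smul, inv_mul_cancel₀ hpq, one_smul] at this
  obtain ⟨d, hd, hd'⟩ := S.ext A y hm _ _ (K_smul f3.le ha) (K_smul e3.le hb) _ hs
  have g1 : q * a.1 = d * (S.v y).1 := by simpa using congrArg (fun w : R3 => w.1) hd'
  have g2 : q * a.2.1 = d * (S.v y).2.1 := by simpa using congrArg (fun w : R3 => w.2.1) hd'
  have g3 : q * a.2.2 = d * (S.v y).2.2 := by simpa using congrArg (fun w : R3 => w.2.2) hd'
  have hqd : q = d := by
    rw [e1] at g1
    rw [e2] at g2
    rcases S.xy y with h | h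
    · exact mul_right_cancel₀ h g1
    · exact mul_right_cancel₀ h g2
  rw [← hqd] at g3
  have := mul_left_cancel₀ f3.ne' g3
  rw [hp, this] at e3
  simp at e3

end Sw
end VZ


namespace VZ
namespace Sw
variable {Z ι : Type*} [Fintype Z] {S : Sw Z ι}

lemma sg_sq {t : ℝ} (ht : t = 1 ∨ t = -1) : t * t = 1 := by rcases ht with rfl | rfl <;> norm_num
lemma sg_ne {t : ℝ} (ht : t = 1 ∨ t = -1) : t ≠ 0 := by rcases ht with rfl | rfl <;> norm_num
lemma sg_neg {t : ℝ} (ht : t = 1 ∨ t = -1) : -t = 1 ∨ -t = -1 := by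
  rcases ht with rfl | rfl <;> norm_num

lemma pole_hi {t : ℝ} (ht : t = 1 ∨ t = -1) (y : Z) : S.Hi t (S.P t) y := by
  obtain ⟨s, hs, h⟩ := S.pole t ht (S.v y)
  refine ⟨_, h, by simp, by simp, ?_⟩
  have := sg_sq ht
  have e : t * ((S.v y + ((0, 0, t * s) : R3)).2.2 - (S.v y).2.2) = t * t * s := by simp; ring
  rw [e, this]; linarith

lemma has_of_hi {t : ℝ} {A : ι} {y : Z} (h : S.Hi t A y) : S.Has A y := by
  obtain ⟨a, ha, e1, e2, _⟩ := h
  exact ⟨a, ha, e1, e2⟩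

lemma has_of_mem {A : ι} {y : Z} (h : S.mem y A) : S.Has A y := ⟨_, K_gen h, rfl, rfl⟩

lemma above_of_hi {t : ℝ} {A B : ι} {y : Z} (h : S.Hi t A y) (hB : S.mem y B) : S.Above t A B := by
  obtain ⟨a, ha, e1, e2, e3⟩ := h
  exact ⟨a, ha, _, K_gen hB, e1, e2, by rw [e1, e2]; exact S.xy y, e3⟩

lemma pole_above {t : ℝ} (ht : t = 1 ∨ t = -1) (A : ι) : S.Above t (S.P t) A := by
  obtain ⟨z, hz⟩ := S.ne A
  exact above_of_hi (pole_hi ht z) hz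

lemma has_mid {A : ι} {s : ℝ} {a c : R3} (ha : a ∈ S.K A) (hc : c ∈ S.K A) {y : Z}
    (h1 : 0 ≤ s * dt a (S.v y)) (h2 : 0 ≤ s * dt (S.v y) c) (h3 : 0 < s * dt a c) :
    S.Has A y := by
  have := K_smul (S := S) (inv_nonneg.2 h3.le) (K_add (K_smul h2 ha) (K_smul h1 hc))
  refine ⟨_, this, ?_, ?_⟩
  · have e : s * dt (S.v y) c * a.1 + s * dt a (S.v y) * c.1 = s * dt a c * (S.v y).1 := by
      unfold dt; ring
    simp only [Prod.smul_fst, Prod.fst_add, smul_eq_mul, e]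
    rw [inv_mul_cancel_left₀ h3.ne']
  · have e : s * dt (S.v y) c * a.2.1 + s * dt a (S.v y) * c.2.1 = s * dt a c * (S.v y).2.1 := by
      unfold dt; ring
    simp only [Prod.smul_fst, Prod.smul_snd, Prod.fst_add, Prod.snd_add, smul_eq_mul, e]
    rw [inv_mul_cancel_left₀ h3.ne']

lemma side [Finite ι] {y : Z} {A : ι} (hm : S.mem y A) (h1 : ¬ S.IsSt 1 y A)
    (h2 : ¬ S.IsSt (-1) y A) : S.Hi 1 A y ∨ S.Hi (-1) A y := by
  by_cases p1 : A = S.P 1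
  · subst p1; exact Or.inl (pole_hi (Or.inl rfl) y)
  by_cases p2 : A = S.P (-1)
  · subst p2; exact Or.inr (pole_hi (Or.inr rfl) y)
  obtain ⟨s, hs⟩ := exists_st (S := S) p1 p2 (s := 1) one_ne_zero
  obtain ⟨e, he⟩ := exists_st (S := S) p1 p2 (s := -1) (by norm_num)
  have hsy : s ≠ y := fun h => h1 (h ▸ hs)
  have hey : e ≠ y := fun h => h2 (h ▸ he)
  have d1 := dt_pos_of_ne one_ne_zero hs.1 hm hsy (hs.2.2.2 y hm)
  have d2' := dt_pos_of_ne (by norm_num) he.1 hm hey (he.2.2.2 y hm)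
  have d2 : 0 < 1 * dt (S.v y) (S.v e) := by unfold dt at *; linarith
  have d3 := dt_trans p1 p2 (K_gen hs.1) (K_gen hm) (K_gen he.1) d1 d2
  rw [one_mul] at d1 d2 d3
  set α := dt (S.v s) (S.v y)
  set β := dt (S.v y) (S.v e)
  set γ := dt (S.v s) (S.v e) with hγ
  have k1 : β • S.v s ∈ S.K A := K_smul d2.le (K_gen hs.1)
  have k2 : α • S.v e ∈ S.K A := K_smul d1.le (K_gen he.1)
  have f1 : (β • S.v s + α • S.v e).1 = γ * (S.v y).1 := by
    simp [α, β, γ, dt]; ring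
  have f2 : (β • S.v s + α • S.v e).2.1 = γ * (S.v y).2.1 := by
    simp [α, β, γ, dt]; ring
  have hK := K_smul (S := S) (inv_nonneg.2 d3.le) (K_add k1 k2)
  have g1 : (γ⁻¹ • (β • S.v s + α • S.v e)).1 = (S.v y).1 := by
    rw [Prod.smul_fst, f1, smul_eq_mul, inv_mul_cancel_left₀ d3.ne']
  have g2 : (γ⁻¹ • (β • S.v s + α • S.v e)).2.1 = (S.v y).2.1 := by
    rw [Prod.smul_snd, Prod.smul_fst, f2, smul_eq_mul, inv_mul_cancel_left₀ d3.ne']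
  rcases lt_trichotomy ((γ⁻¹ • (β • S.v s + α • S.v e)).2.2) (S.v y).2.2 with h | h | h
  · exact Or.inr ⟨_, hK, g1, g2, by linarith⟩
  · exfalso
    have e0 : γ⁻¹ • (β • S.v s + α • S.v e) = S.v y := by
      ext
      · exact g1
      · exact g2
      · exact h
    have e1 : β • S.v s + α • S.v e = γ • S.v y := by
      rw [← e0, smul_smul, mul_inv_cancel₀ d3.ne', one_smul]
    obtain ⟨d, hd, hd'⟩ := S.ext A y hm _ _ k1 k2 _ e1
    have u1 : β * (S.v s).1 = d * (S.v y).1 := by simpa using congrArg (fun w : R3 => w.1) hd'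
    have u2 : β * (S.v s).2.1 = d * (S.v y).2.1 := by
      simpa using congrArg (fun w : R3 => w.2.1) hd'
    have : β * α = 0 := by
      have : β * α = (β * (S.v s).1) * (S.v y).2.1 - (β * (S.v s).2.1) * (S.v y).1 := by
        simp only [α, dt]; ring
      rw [this, u1, u2]; ring
    exact (mul_pos d2 d1).ne' this
  · exact Or.inl ⟨_, hK, g1, g2, by linarith⟩

lemma mem_cases {y : Z} {A B C : ι} (hAB : A ≠ B) (hA : S.mem y A) (hB : S.mem y B)
    (hC : S.mem y C) : C = A ∨ C = B := by
  rcases hA with rfl | rfl <;> rcases hB with rfl | rfl <;> rcases hC with rfl | rfl <;> simp_all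

lemma mem_two {y z : Z} {A B : ι} (hAB : A ≠ B) (h1 : S.mem y A) (h2 : S.mem y B)
    (h3 : S.mem z A) (h4 : S.mem z B) : y = z := by
  rcases h1 with rfl | rfl <;> rcases h2 with h2 | h2 <;> rcases h3 with h3 | h3 <;>
    rcases h4 with h4 | h4
  all_goals first
    | exact absurd h2 hAB
    | exact absurd (h3.symm.trans h4) hAB
    | exact absurd h3 (rb_ne _ _)
    | exact absurd h3.symm (rb_ne _ _)
    | exact S.inj _ _ h3.symm (h2.trans h4.symm)
    | exact S.inj _ _ (h2.trans h4.symm) h3.symm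

/-- determined by one set and a set of y -/
lemma mem_det {y z z' : Z} {X E E' : ι} (h1 : S.mem z X) (h2 : S.mem z' X) (hE : E ≠ X)
    (hE' : E' ≠ X) (h3 : S.mem z E) (h4 : S.mem z' E') (h5 : S.mem y E) (h6 : S.mem y E') :
    z = z' := by
  have hc : ∀ (x : Z) (A B : ι), S.mem x A → S.mem x B → A ≠ B → S.col A ≠ S.col B := by
    intro x A B hA hB hAB
    rcases hA with rfl | rfl <;> rcases hB with rfl | rfl <;>
      simp_all [S.colr, S.colb]
  by_cases hEE : E = E'
  · subst hEE
    exact mem_two hE.symm h1 h3 h2 h4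
  · exfalso
    have a1 := hc _ _ _ h3 h1 hE
    have a2 := hc _ _ _ h4 h2 hE'
    have a3 := hc _ _ _ h5 h6 hEE
    revert a1 a2 a3
    cases S.col E <;> cases S.col E' <;> cases S.col X <;> simp

lemma exists_nb [Finite ι] (t : ℝ) (y : Z) (ht : t = 1 ∨ t = -1) : ∃ X, S.Hi t X y ∧
    (∀ A, A ≠ X → S.Hi t A y → S.Above t A X) ∧ ∀ C, S.mem y C → S.Hi t C y → C = X := by
  let T := {A : ι // S.Hi t A y}
  choose f hf using fun A : T => A.2
  haveI : Nonempty T := ⟨⟨S.P t, pole_hi ht y⟩⟩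
  obtain ⟨X, hX⟩ := Finite.exists_min (fun A : T => t * ((f A).2.2 - (S.v y).2.2))
  have hab : ∀ A, A ≠ X.1 → S.Hi t A y → S.Above t A X.1 := by
    intro A hA hh
    have h1 := hX ⟨A, hh⟩
    obtain ⟨a1, a2, a3, a4⟩ := hf ⟨A, hh⟩
    obtain ⟨b1, b2, b3, b4⟩ := hf X
    refine ⟨_, a1, _, b1, by rw [a2, b2], by rw [a3, b3], by rw [a2, a3]; exact S.xy y, ?_⟩
    refine lt_of_le_of_ne (by linarith) fun h0 => ?_
    have h00 : (f ⟨A, hh⟩).2.2 = (f X).2.2 := by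
      have := (mul_eq_zero.1 h0.symm).resolve_left (sg_ne ht)
      linarith
    have heq : f ⟨A, hh⟩ = f X := by
      ext
      · rw [a2, b2]
      · rw [a3, b3]
      · exact h00
    have := (common hA a1 (heq ▸ b1) a2 a3).2.2
    rw [this] at a4
    simp at a4
  refine ⟨X.1, X.2, hab, fun C hC hh => ?_⟩
  by_contra hne
  exact above_antisymm hne (hab C hne hh) (above_of_hi X.2 hC)

variable (S) in
def isCand (σ : ℝ) (z y : Z) : Prop := 0 < σ * dt (S.v y) (S.v z) ∧
  ((∃ A, S.mem z A ∧ S.IsSt σ y A) ∨ (∃ A B D τ, (τ = 1 ∨ τ = -1) ∧ A ≠ B ∧ S.mem z A ∧ S.mem z B ∧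
    ¬ S.mem z D ∧ S.IsSt (-σ) y D ∧ S.Above τ A B ∧ S.Above τ A D ∧ S.Above τ D B ∧
    ∀ A', S.mem z A' → S.Has A' y))

variable (S) in
def isL (σ : ℝ) (z y : Z) : Prop := (y = z ∧ ∃ A, S.mem z A ∧ S.IsSt σ z A) ∨
  ((¬ ∃ A, S.mem z A ∧ S.IsSt σ z A) ∧ S.isCand σ z y ∧
    ∀ y', S.isCand σ z y' → 0 ≤ σ * dt (S.v y') (S.v y))

lemma P_cases {t : ℝ} (ht : t = 1 ∨ t = -1) {A : ι} (h1 : A ≠ S.P t) (h2 : A ≠ S.P (-t)) :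
    A ≠ S.P 1 ∧ A ≠ S.P (-1) := by
  rcases ht with rfl | rfl
  · exact ⟨h1, h2⟩
  · rw [neg_neg] at h2; exact ⟨h2, h1⟩

lemma start_cand [Finite ι] {σ : ℝ} (hσ : σ = 1 ∨ σ = -1) {z : Z}
    (hn : ¬ ∃ A, S.mem z A ∧ S.IsSt σ z A) {A : ι} (hA : S.mem z A) (h1 : A ≠ S.P 1)
    (h2 : A ≠ S.P (-1)) : ∃ s, S.mem s A ∧ S.isCand σ z s := by
  obtain ⟨s, hs⟩ := exists_st (S := S) h1 h2 (sg_ne hσ)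
  have hsz : s ≠ z := fun h => hn ⟨A, hA, h ▸ hs⟩
  exact ⟨s, hs.1, dt_pos_of_ne (sg_ne hσ) hs.1 hA hsz (hs.2.2.2 z hA), Or.inl ⟨A, hA, hs⟩⟩

lemma exists_isL [Finite ι] {σ : ℝ} (hσ : σ = 1 ∨ σ = -1) (z : Z) : ∃ y, S.isL σ z y := by
  by_cases hn : ∃ A, S.mem z A ∧ S.IsSt σ z A
  · exact ⟨z, Or.inl ⟨rfl, hn⟩⟩
  have hc : ∃ y, S.isCand σ z y := by
    have hnp := S.npole z
    have hrb := rb_ne (S := S) z z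
    by_cases h1 : S.r z ≠ S.P 1 ∧ S.r z ≠ S.P (-1)
    · obtain ⟨s, _, h⟩ := start_cand hσ hn (Or.inl rfl) h1.1 h1.2
      exact ⟨s, h⟩
    · have h2 : S.b z ≠ S.P 1 ∧ S.b z ≠ S.P (-1) := by
        constructor <;> intro h <;> apply h1 <;> constructor <;> intro h' <;>
          first
          | exact hnp ⟨Or.inr h, Or.inl h'⟩
          | exact hnp ⟨Or.inl h', Or.inr h⟩
          | exact hrb (h'.trans h.symm)
      obtain ⟨s, _, h⟩ := start_cand hσ hn (Or.inr rfl) h2.1 h2.2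
      exact ⟨s, h⟩
  let T := {y : Z // S.isCand σ z y}
  haveI : Nonempty T := ⟨⟨hc.choose, hc.choose_spec⟩⟩
  obtain ⟨y, hy⟩ := Finite.exists_max (fun y : T =>
    ((S.v y).1 * (S.v z).1 + (S.v y).2.1 * (S.v z).2.1) / (σ * dt (S.v y) (S.v z)))
  refine ⟨y.1, Or.inr ⟨hn, y.2, fun y' hy' => ?_⟩⟩
  have h := hy ⟨y', hy'⟩
  simp only at h
  rw [div_le_div_iff₀ hy'.1 y.2.1] at h
  have hpos : 0 < (S.v z).1 ^ 2 + (S.v z).2.1 ^ 2 := by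
    rcases S.xy z with h | h <;> positivity
  have key : 0 ≤ ((S.v z).1 ^ 2 + (S.v z).2.1 ^ 2) * (σ * dt (S.v y') (S.v y)) := by
    unfold dt at *; nlinarith
  exact nonneg_of_mul_nonneg_right key hpos

lemma isL_ne {σ : ℝ} {z y : Z} (h : S.isL σ z y) (hne : y ≠ z) :
    (¬ ∃ A, S.mem z A ∧ S.IsSt σ z A) ∧ S.isCand σ z y ∧
    ∀ y', S.isCand σ z y' → 0 ≤ σ * dt (S.v y') (S.v y) := by
  rcases h with h | h
  · exact absurd h.1 hne
  · exact h

lemma isL_has [Finite ι] {σ : ℝ} (hσ : σ = 1 ∨ σ = -1) {z y : Z} (h : S.isL σ z y) (hne : y ≠ z)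
    {A : ι} (hA : S.mem z A) : S.Has A y := by
  obtain ⟨hn, hc, hmax⟩ := isL_ne h hne
  by_cases p1 : A = S.P 1
  · subst p1; exact has_of_hi (pole_hi (Or.inl rfl) y)
  by_cases p2 : A = S.P (-1)
  · subst p2; exact has_of_hi (pole_hi (Or.inr rfl) y)
  obtain ⟨s, hs, hsc⟩ := start_cand hσ hn hA p1 p2
  exact has_mid (K_gen hs) (K_gen hA) (hmax s hsc) hc.1.le hsc.1

lemma isL_above [Finite ι] {σ : ℝ} (hσ : σ = 1 ∨ σ = -1) {z y : Z} (h : S.isL σ z y) (hne : y ≠ z)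
    {A B : ι} (hAB : A ≠ B) (hA : S.mem z A) (hB : S.mem z B) :
    S.Above 1 A B ∨ S.Above 1 B A := by
  obtain ⟨a, ha, a1, a2⟩ := isL_has hσ h hne hA
  obtain ⟨b, hb, b1, b2⟩ := isL_has hσ h hne hB
  rcases lt_trichotomy a.2.2 b.2.2 with h0 | h0 | h0
  · exact Or.inr ⟨b, hb, a, ha, by rw [a1, b1], by rw [a2, b2], by rw [b1, b2]; exact S.xy y,
      by linarith⟩
  · exfalso
    have heq : a = b := by
      ext
      · rw [a1, b1]
      · rw [a2, b2]
      · exact h0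
    obtain ⟨c1, c2, _⟩ := common hAB ha (heq ▸ hb) a1 a2
    exact hne (mem_two hAB c1 c2 hA hB)
  · exact Or.inl ⟨a, ha, b, hb, by rw [a1, b1], by rw [a2, b2], by rw [a1, a2]; exact S.xy y,
      by linarith⟩

lemma squeeze [Finite ι] {σ : ℝ} (hσ : σ = 1 ∨ σ = -1) {z y : Z} (h : S.isL σ z y) (hne : y ≠ z)
    {A B X : ι} {τ : ℝ} (hτ : τ = 1 ∨ τ = -1) (hAB : A ≠ B) (hA : S.mem z A) (hB : S.mem z B)
    (hab : S.Above τ A B) (hXA : X ≠ A) (hXB : X ≠ B) (hax : S.Above τ A X)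
    (hxb : S.Above τ X B) (hX : S.Has X y) (hst : ¬ S.IsSt (-σ) y X) : False := by
  obtain ⟨hn, hc, hmax⟩ := isL_ne h hne
  have q1 : X ≠ S.P τ := by
    rintro rfl
    exact above_antisymm hXA (pole_above hτ A) hax
  have q2 : X ≠ S.P (-τ) := by
    rintro rfl
    exact above_antisymm hXB hxb (above_neg' (pole_above (sg_neg hτ) B))
  obtain ⟨p1, p2⟩ := P_cases hτ q1 q2
  have hσ' := sg_ne (sg_neg hσ)
  obtain ⟨e, he⟩ := exists_st (S := S) p1 p2 hσ'
  obtain ⟨x, hx, x1, x2⟩ := hX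
  have hdx : ∀ u, dt u x = dt u (S.v y) := fun u => by unfold dt; rw [x1, x2]
  have hdx' : ∀ u, dt x u = dt (S.v y) u := fun u => by unfold dt; rw [x1, x2]
  have hye : 0 < σ * dt (S.v y) (S.v e) := by
    by_contra hle
    push Not at hle
    obtain ⟨c, hc0, hxc⟩ := st_eq hσ' he hx (by rw [hdx]; unfold dt at *; linarith)
    have hc1 : c ≠ 0 := by
      rintro rfl
      rw [zero_smul] at hxc
      have := S.xy y
      rw [← x1, ← x2, hxc] at this
      simp at this
    have : e = y := eq_of_long (S := S) (lt_of_le_of_ne hc0 hc1.symm)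
      (by rw [← x1, hxc]; simp) (by rw [← x2, hxc]; simp)
    exact hst (this ▸ he)
  have hzX : ¬ S.mem z X := fun hm => by
    rcases mem_cases hAB hA hB hm with h | h
    · exact hXA h
    · exact hXB h
  by_cases hez : 0 < σ * dt (S.v e) (S.v z)
  · have hcand : S.isCand σ z e := by
      refine ⟨hez, Or.inr ⟨A, B, X, τ, hτ, hAB, hA, hB, hzX, he, hab, hax, hxb, fun A' hA' => ?_⟩⟩
      obtain ⟨a, ha, a1, a2⟩ := isL_has hσ h hne hA'
      have hda : ∀ u, dt a u = dt (S.v y) u := fun u => by unfold dt; rw [a1, a2]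
      exact has_mid (s := σ) ha (K_gen hA') (by rw [hda]; exact hye.le) hez.le
        (by rw [hda]; exact hc.1)
    have := hmax e hcand
    unfold dt at *; linarith
  · push Not at hez
    have hXz : S.Has X z := has_mid (s := σ) hx (K_gen he.1) (by rw [hdx']; exact hc.1.le)
      (by unfold dt at *; linarith) (by rw [hdx']; exact hye)
    rcases hi_of_has hτ hXz hzX with h | h
    · exact above_antisymm hXA (above_of_hi h hA) hax
    · exact above_antisymm hXB hxb (above_neg' (above_of_hi h hB))

lemma cand_cases {σ : ℝ} {z y : Z} (hc : S.isCand σ z y) {A B : ι} {τ : ℝ}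
    (hτ : τ = 1 ∨ τ = -1) (hAB : A ≠ B) (hA : S.mem z A) (hB : S.mem z B)
    (hab : S.Above τ A B) : (∃ A, S.mem z A ∧ S.IsSt σ y A) ∨
    ∃ D, ¬ S.mem z D ∧ S.IsSt (-σ) y D ∧ S.Above τ A D ∧ S.Above τ D B := by
  rcases hc.2 with h | ⟨A', B', D, τ', hτ', hne, hA', hB', hD, hst, h1, h2, h3, -⟩
  · exact Or.inl h
  · refine Or.inr ⟨D, hD, hst, ?_⟩
    have hcases : (A' = A ∧ B' = B) ∨ (A' = B ∧ B' = A) := by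
      rcases mem_cases hAB hA hB hA' with rfl | rfl <;>
        rcases mem_cases hAB hA hB hB' with rfl | rfl <;> simp_all
    have ht : τ' = τ ∨ τ' = -τ := by
      rcases hτ with rfl | rfl <;> rcases hτ' with rfl | rfl <;> simp
    rcases hcases with ⟨rfl, rfl⟩ | ⟨rfl, rfl⟩ <;> rcases ht with rfl | rfl
    · exact ⟨h2, h3⟩
    · exact (above_antisymm hAB hab (above_neg' h1)).elim
    · exact (above_antisymm hAB hab h1).elim
    · exact ⟨above_neg' h3, above_neg' h2⟩

lemma L14 [Finite ι] {σ : ℝ} (hσ : σ = 1 ∨ σ = -1) {z y : Z} (h : S.isL σ z y) (hne : y ≠ z)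
    {A B X : ι} {τ : ℝ} (hτ : τ = 1 ∨ τ = -1) (hAB : A ≠ B) (hA : S.mem z A) (hB : S.mem z B)
    (hab : S.Above τ A B) (hX : S.Hi τ X y) (hXmin : ∀ A, A ≠ X → S.Hi τ A y → S.Above τ A X) :
    A = X ∨ S.mem y A := by
  by_contra hcon
  push Not at hcon
  obtain ⟨hAX, hyA⟩ := hcon
  have hc := cand_cases (isL_ne h hne).2.1 hτ hAB hA hB hab
  have hσ' := sg_ne (sg_neg hσ)
  have hhi : S.Hi τ A y := by
    rcases hi_of_has hτ (isL_has hσ h hne hA) hyA with h1 | h1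
    · exact h1
    · exfalso
      rcases hc with ⟨A0, hA0, hst⟩ | ⟨D, hD, hst, h2, h3⟩
      · rcases mem_cases hAB hA hB hA0 with rfl | rfl
        · exact hyA hst.1
        · exact above_antisymm hAB hab (above_neg' (above_of_hi h1 hst.1))
      · exact above_antisymm (fun h : A = D => hD (h ▸ hA)) h2 (above_neg' (above_of_hi h1 hst.1))
  have hax := hXmin A hAX hhi
  have hXB : X ≠ B ∧ S.Above τ X B := by
    rcases hc with ⟨A0, hA0, hst⟩ | ⟨D, hD, hst, h2, h3⟩
    · rcases mem_cases hAB hA hB hA0 with rfl | rfl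
      · exact (hyA hst.1).elim
      · exact ⟨fun h => st_not_hi (sg_ne hσ) hst (h ▸ hX), above_of_hi hX hst.1⟩
    · have hDB : D ≠ B := fun h => hD (h ▸ hB)
      have hXB : X ≠ B := by
        rintro rfl
        exact above_antisymm hDB h3 (above_of_hi hX hst.1)
      refine ⟨hXB, ?_⟩
      obtain ⟨x, hx, x1, x2, x3⟩ := hX
      obtain ⟨b, hb, b1, b2⟩ := isL_has hσ h hne hB
      rcases lt_trichotomy (τ * (x.2.2 - b.2.2)) 0 with h0 | h0 | h0
      · exact (above_antisymm hDB h3 (above_of_hi ⟨b, hb, b1, b2, by linarith⟩ hst.1)).elim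
      · exfalso
        have h00 := (mul_eq_zero.1 h0).resolve_left (sg_ne hτ)
        have heq : x = b := by
          ext
          · rw [x1, b1]
          · rw [x2, b2]
          · linarith
        have := (common hXB hx (heq ▸ hb) x1 x2).2.2
        rw [this] at x3
        simp at x3
      · exact ⟨x, hx, b, hb, by rw [x1, b1], by rw [x2, b2], by rw [x1, x2]; exact S.xy y, h0⟩
  exact squeeze hσ h hne hτ hAB hA hB hab (Ne.symm hAX) hXB.1 hax hXB.2 (has_of_hi hX)
    fun hst => st_not_hi hσ' hst hX

lemma st_unique {σ : ℝ} (hσ : σ = 1 ∨ σ = -1) {y y' : Z} {A : ι} (h : S.IsSt σ y A)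
    (h' : S.IsSt σ y' A) : y = y' := by
  by_contra hne
  have h1 := dt_pos_of_ne (sg_ne hσ) h.1 h'.1 hne (h.2.2.2 _ h'.1)
  have h2 := h'.2.2.2 _ h.1
  unfold dt at *; linarith

lemma st_excl {σ : ℝ} (hσ : σ = 1 ∨ σ = -1) {y : Z} {A : ι} (h : S.IsSt σ y A)
    (h' : S.IsSt (-σ) y A) : False := by
  obtain ⟨z, hz, hzA⟩ := S.deg A y h.1
  have h1 := dt_pos_of_ne (sg_ne hσ) h.1 hzA hz.symm (h.2.2.2 _ hzA)
  have h2 := h'.2.2.2 _ hzA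
  linarith

/-- description of the z sent to y -/
lemma types [Finite ι] {σ : ℝ} (hσ : σ = 1 ∨ σ = -1) {z y : Z} (h : S.isL σ z y) (hne : y ≠ z)
    {X Y : ι} (hX : S.Hi 1 X y) (hXmin : ∀ A, A ≠ X → S.Hi 1 A y → S.Above 1 A X)
    (hY : S.Hi (-1) Y y) (hYmin : ∀ A, A ≠ Y → S.Hi (-1) A y → S.Above (-1) A Y) :
    ∃ A B, A ≠ B ∧ S.mem z A ∧ S.mem z B ∧ S.Above 1 A B ∧ (A = X ∨ S.mem y A) ∧
      (B = Y ∨ S.mem y B) := by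
  have key : ∀ A B, A ≠ B → S.mem z A → S.mem z B → S.Above 1 A B →
      ∃ A B, A ≠ B ∧ S.mem z A ∧ S.mem z B ∧ S.Above 1 A B ∧ (A = X ∨ S.mem y A) ∧
      (B = Y ∨ S.mem y B) := fun A B hAB hA hB hab =>
    ⟨A, B, hAB, hA, hB, hab, L14 hσ h hne (Or.inl rfl) hAB hA hB hab hX hXmin,
      L14 hσ h hne (Or.inr rfl) hAB.symm hB hA (above_neg hab) hY hYmin⟩
  rcases isL_above hσ h hne (rb_ne z z) (Or.inl rfl) (Or.inr rfl) with h1 | h1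
  · exact key _ _ (rb_ne z z) (Or.inl rfl) (Or.inr rfl) h1
  · exact key _ _ (rb_ne z z).symm (Or.inr rfl) (Or.inl rfl) h1

lemma exclusion [Finite ι] {σ : ℝ} (hσ : σ = 1 ∨ σ = -1) {z y : Z} (h : S.isL σ z y) (hne : y ≠ z)
    {X Y C : ι} (hX : S.Hi 1 X y) (hY : S.Hi (-1) Y y) (hXY : X ≠ Y)
    (hzX : S.mem z X) (hzY : S.mem z Y) (hyX : ¬ S.mem y X) (hyY : ¬ S.mem y Y)
    (hab : S.Above 1 X Y) (hC : S.IsSt σ y C) : False := by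
  refine squeeze hσ h hne (Or.inl rfl) hXY hzX hzY hab (X := C) ?_ ?_ (above_of_hi hX hC.1)
    (above_neg' (above_of_hi hY hC.1)) (has_of_mem hC.1) fun h => st_excl hσ hC h
  · rintro rfl; exact hyX hC.1
  · rintro rfl; exact hyY hC.1

end Sw
end VZ


namespace VZ
namespace Sw
variable {Z ι : Type*} [Fintype Z] {S : Sw Z ι}

def sg (σ : Bool) : ℝ := if σ then 1 else -1

lemma sg_or (σ : Bool) : sg σ = 1 ∨ sg σ = -1 := by cases σ <;> simp [sg]

lemma sg_ne_neg {σ σ' : Bool} (h : σ ≠ σ') : sg σ' = - sg σ := by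
  cases σ <;> cases σ' <;> simp_all [sg]

lemma sigma_unique {σ σ' : Bool} {z y : Z} (hne : y ≠ z) (h : S.isL (sg σ) z y)
    (h' : S.isL (sg σ') z y) : σ = σ' := by
  by_contra hs
  have h1 := (isL_ne h hne).2.1.1
  have h2 := (isL_ne h' hne).2.1.1
  rw [sg_ne_neg hs] at h2
  linarith

variable (S) in
noncomputable def W [Fintype ι] (y : Z) : Finset (Bool × ι) :=
  Finset.univ.filter fun p => S.IsSt (sg p.1) y p.2

lemma mem_W [Fintype ι] {y : Z} {σ : Bool} {A : ι} : (σ, A) ∈ S.W y ↔ S.IsSt (sg σ) y A := by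
  unfold W
  rw [Finset.mem_filter]
  simp

lemma nonside_W [Fintype ι] {y : Z} {A : ι} (hm : S.mem y A)
    (h : ¬ (S.Hi 1 A y ∨ S.Hi (-1) A y)) : ∃ σ, (σ, A) ∈ S.W y := by
  by_contra hcon
  push Not at hcon
  apply h
  apply side hm
  · have := hcon true
    rw [mem_W] at this
    simpa [sg] using this
  · have := hcon false
    rw [mem_W] at this
    simpa [sg] using this

lemma local_count [Fintype ι] (L : Bool → Z → Z) (hL : ∀ σ z, S.isL (sg σ) z (L σ z)) (y : Z) :
    (Finset.univ.filter fun p : Bool × Z => L p.1 p.2 = y).card ≤ 2 * (S.W y).card := by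
  obtain ⟨X, hX, hXmin, hXu⟩ := exists_nb (S := S) 1 y (Or.inl rfl)
  obtain ⟨Y, hY, hYmin, hYu⟩ := exists_nb (S := S) (-1) y (Or.inr rfl)
  have hXY : X ≠ Y := by
    rintro rfl
    exact hi_excl hX hY
  set Q : Finset Bool := Finset.univ.filter fun σ => ∃ A, S.IsSt (sg σ) y A with hQ
  have hQW : Q.card ≤ (S.W y).card := by
    have : Q ⊆ (S.W y).image Prod.fst := by
      intro σ hσ
      obtain ⟨A, hA⟩ := (Finset.mem_filter.1 hσ).2
      exact Finset.mem_image.2 ⟨(σ, A), by simp [W, hA], rfl⟩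
    exact (Finset.card_le_card this).trans Finset.card_image_le
  let T0 : Finset (Bool × Z) := Finset.univ.filter fun p => L p.1 p.2 = y ∧ p.2 = y
  let T : ι → Finset (Bool × Z) := fun X => Finset.univ.filter fun p => L p.1 p.2 = y ∧ p.2 ≠ y ∧
    S.mem p.2 X ∧ ∃ E, E ≠ X ∧ S.mem p.2 E ∧ S.mem y E
  let T3 : Finset (Bool × Z) := Finset.univ.filter fun p => L p.1 p.2 = y ∧ p.2 ≠ y ∧
    S.mem p.2 X ∧ S.mem p.2 Y ∧ ¬ S.mem y X ∧ ¬ S.mem y Y ∧ S.Above 1 X Y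
  have hT0 : T0.card ≤ Q.card := by
    apply Finset.card_le_card_of_injOn Prod.fst
    · rintro ⟨σ, z⟩ hp
      obtain ⟨h1, h2⟩ := (Finset.mem_filter.1 hp).2
      simp only at h1 h2
      subst h2
      have h := hL σ z
      rw [h1] at h
      rw [hQ]
      simp only [Finset.coe_filter, Finset.mem_univ, true_and, Set.mem_ofPred_eq]
      rcases h with ⟨_, A, _, hA⟩ | ⟨_, hc, _⟩
      · exact ⟨A, hA⟩
      · have := hc.1
        unfold dt at this
        ring_nf at this
        exact (lt_irrefl _ this).elim
    · rintro ⟨σ, z⟩ hp ⟨σ', z'⟩ hp' h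
      have h1 := (Finset.mem_filter.1 hp).2.2
      have h2 := (Finset.mem_filter.1 hp').2.2
      simp only at h h1 h2
      rw [h, h1, h2]
  have hsame : ∀ p p' : Bool × Z, L p.1 p.2 = y → L p'.1 p'.2 = y → p.2 ≠ y → p.2 = p'.2 →
      p = p' := by
    rintro ⟨σ, z⟩ ⟨σ', z'⟩ h1 h2 h3 h4
    simp only at h1 h2 h3 h4
    subst h4
    have e1 := hL σ z
    have e2 := hL σ' z
    rw [h1] at e1
    rw [h2] at e2
    rw [sigma_unique h3.symm e1 e2]
  have hT : ∀ X, (T X).card ≤ 1 := by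
    intro X
    rw [Finset.card_le_one]
    intro p hp p' hp'
    obtain ⟨h1, h2, h3, E, h4, h5, h6⟩ := (Finset.mem_filter.1 hp).2
    obtain ⟨h1', h2', h3', E', h4', h5', h6'⟩ := (Finset.mem_filter.1 hp').2
    exact hsame p p' h1 h1' h2 (mem_det h3 h3' h4 h4' h5 h5' h6 h6')
  have hT3 : T3.card ≤ 1 := by
    rw [Finset.card_le_one]
    intro p hp p' hp'
    obtain ⟨h1, h2, h3, h4, h5, h6⟩ := (Finset.mem_filter.1 hp).2
    obtain ⟨h1', h2', h3', h4', h5', h6'⟩ := (Finset.mem_filter.1 hp').2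
    exact hsame p p' h1 h1' h2 (mem_two hXY h3 h4 h3' h4')
  have hTe : ∀ X, S.mem y X → T X = ∅ := by
    intro X hXy
    rw [Finset.eq_empty_iff_forall_notMem]
    intro p hp
    obtain ⟨h1, h2, h3, E, h4, h5, h6⟩ := (Finset.mem_filter.1 hp).2
    exact h2 (mem_two h4 h5 h3 h6 hXy)
  have hT3Q : T3.Nonempty → Q.card ≤ 1 := by
    rintro ⟨⟨σ, z⟩, hp⟩
    obtain ⟨h1, h2, h3, h4, h5, h6, h7⟩ := (Finset.mem_filter.1 hp).2
    simp only at h1 h2 h3 h4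
    have hl := hL σ z
    rw [h1] at hl
    have : σ ∉ Q := by
      intro hσ
      obtain ⟨C, hC⟩ := (Finset.mem_filter.1 hσ).2
      exact exclusion (sg_or σ) hl (Ne.symm h2) hX hY hXY h3 h4 h5 h6 h7 hC
    have hlt : Q.card < (Finset.univ : Finset Bool).card :=
      Finset.card_lt_card ⟨Finset.subset_univ _, fun h => this (h (Finset.mem_univ _))⟩
    simp at hlt
    omega
  have hcover : (Finset.univ.filter fun p : Bool × Z => L p.1 p.2 = y) ⊆
      T0 ∪ (T X ∪ (T Y ∪ T3)) := by
    rintro ⟨σ, z⟩ hp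
    have hp := (Finset.mem_filter.1 hp).2
    simp only at hp
    simp only [Finset.mem_union, T0, T, T3, Finset.mem_filter, Finset.mem_univ, true_and, hp]
    by_cases hzy : z = y
    · exact Or.inl hzy
    · right
      have hl := hL σ z
      rw [hp] at hl
      obtain ⟨A, B, hAB, hA, hB, hab, hAX, hBY⟩ :=
        types (sg_or σ) hl (Ne.symm hzy) hX hXmin hY hYmin
      have hnb : ¬ (S.mem y A ∧ S.mem y B) := fun h => hzy (mem_two hAB hA hB h.1 h.2)
      by_cases hyA : S.mem y A
      · have hyB : ¬ S.mem y B := fun h => hnb ⟨hyA, h⟩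
        obtain rfl := hBY.resolve_right hyB
        exact Or.inr (Or.inl ⟨hzy, hB, A, hAB, hA, hyA⟩)
      · obtain rfl := hAX.resolve_right hyA
        by_cases hyB : S.mem y B
        · exact Or.inl ⟨hzy, hA, B, hAB.symm, hB, hyB⟩
        · obtain rfl := hBY.resolve_right hyB
          exact Or.inr (Or.inr ⟨hzy, hA, hB, hyA, hyB, hab⟩)
  have hcard := Finset.card_le_card hcover
  have u1 := Finset.card_union_le T0 (T X ∪ (T Y ∪ T3))
  have u2 := Finset.card_union_le (T X) (T Y ∪ T3)
  have u3 := Finset.card_union_le (T Y) T3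
  have hTX := hT X
  have hTY := hT Y
  have hnon : ∀ E, S.mem y E → E ≠ X → E ≠ Y → ∃ σ, (σ, E) ∈ S.W y := by
    intro E hE hEX hEY
    apply nonside_W hE
    rintro (h | h)
    · exact hEX (hXu E hE h)
    · exact hEY (hYu E hE h)
  have hT3e : S.mem y X ∨ S.mem y Y → T3 = ∅ := by
    intro h
    rw [Finset.eq_empty_iff_forall_notMem]
    intro p hp
    obtain ⟨h1, h2, h3, h4, h5, h6, h7⟩ := (Finset.mem_filter.1 hp).2
    exact h.elim h5 h6
  have hone : ∀ U V, S.mem y U → ¬ S.mem y V → (U = X ∧ V = Y ∨ U = Y ∧ V = X) →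
      1 ≤ (S.W y).card := by
    intro U V hU hV hUV
    obtain ⟨E, hE, hEU⟩ : ∃ E, S.mem y E ∧ E ≠ U := by
      rcases hU with rfl | rfl
      · exact ⟨S.b y, Or.inr rfl, (rb_ne y y).symm⟩
      · exact ⟨S.r y, Or.inl rfl, rb_ne y y⟩
    have hEV : E ≠ V := fun h => hV (h ▸ hE)
    obtain ⟨σ, hσ⟩ : ∃ σ, (σ, E) ∈ S.W y := by
      rcases hUV with ⟨rfl, rfl⟩ | ⟨rfl, rfl⟩
      · exact hnon E hE hEU hEV
      · exact hnon E hE hEV hEU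
    exact Finset.card_pos.2 ⟨_, hσ⟩
  by_cases hyX : S.mem y X
  · have e1 := hTe X hyX
    have e3 := hT3e (Or.inl hyX)
    rw [e1] at u2 hTX
    rw [e3] at u3
    simp only [Finset.card_empty] at u2 u3
    by_cases hyY : S.mem y Y
    · have e2 := hTe Y hyY
      simp only [e1, e2, e3, Finset.card_empty] at *
      omega
    · have := hone X Y hyX hyY (Or.inl ⟨rfl, rfl⟩)
      simp only [e1, e3] at *
      omega
  · by_cases hyY : S.mem y Y
    · have e2 := hTe Y hyY
      have e3 := hT3e (Or.inr hyY)
      have := hone Y X hyY hyX (Or.inr ⟨rfl, rfl⟩)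
      simp only [e2, e3, Finset.card_empty] at *
      omega
    · have h2 : 2 ≤ (S.W y).card := by
        obtain ⟨σ, h1⟩ := hnon (S.r y) (Or.inl rfl) (fun h => hyX (Or.inl h))
          (fun h => hyY (Or.inl h))
        obtain ⟨σ', h2⟩ := hnon (S.b y) (Or.inr rfl) (fun h => hyX (Or.inr h))
          (fun h => hyY (Or.inr h))
        have : 1 < (S.W y).card := Finset.one_lt_card.2 ⟨_, h1, _, h2, fun h =>
          rb_ne y y (congrArg Prod.snd h)⟩
        omega
      by_cases hne : T3.Nonempty
      · have := hT3Q hne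
        omega
      · rw [Finset.not_nonempty_iff_eq_empty] at hne
        simp only [hne, Finset.card_empty] at *
        omega

theorem sweep [Fintype ι] (S : Sw Z ι) : Fintype.card Z + 4 ≤ 2 * Fintype.card ι := by
  choose L hL using fun (σ : Bool) (z : Z) => exists_isL (S := S) (sg_or σ) z
  have h1 : Fintype.card (Bool × Z) = ∑ y : Z,
      (Finset.univ.filter fun p : Bool × Z => L p.1 p.2 = y).card := by
    rw [← Finset.card_univ]
    exact Finset.card_eq_sum_card_fiberwise fun _ _ => Finset.mem_coe.2 (Finset.mem_univ _)
  have h2 : ∑ y : Z, (S.W y).card ≤ 2 * (Finset.univ.filter fun A : ι => A ≠ S.P 1 ∧ A ≠ S.P (-1)).card := by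
    have : ∑ y : Z, (S.W y).card = (Finset.univ.sigma fun y => S.W y).card := by
      rw [Finset.card_sigma]
    rw [this]
    have h3 : 2 * (Finset.univ.filter fun A : ι => A ≠ S.P 1 ∧ A ≠ S.P (-1)).card =
      ((Finset.univ : Finset Bool) ×ˢ (Finset.univ.filter fun A : ι => A ≠ S.P 1 ∧ A ≠ S.P (-1))).card := by
      simp [Finset.card_product]
    rw [h3]
    apply Finset.card_le_card_of_injOn (fun p => p.2)
    · rintro ⟨y, σ, A⟩ hp
      have := (Finset.mem_sigma.1 hp).2
      simp only [W, Finset.mem_filter] at this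
      simp [this.2.2.1, this.2.2.2.1]
    · rintro ⟨y, σ, A⟩ hp ⟨y', σ', A'⟩ hp' h
      have e1 := (Finset.mem_sigma.1 hp).2
      have e2 := (Finset.mem_sigma.1 hp').2
      simp only [W, Finset.mem_filter] at e1 e2
      simp only at h
      obtain ⟨rfl, rfl⟩ := Prod.mk.inj h
      obtain rfl := st_unique (sg_or σ) e1.2 e2.2
      rfl
  have h3 : (Finset.univ.filter fun A : ι => A ≠ S.P 1 ∧ A ≠ S.P (-1)).card + 2 =
      Fintype.card ι := by
    have : (Finset.univ.filter fun A : ι => A ≠ S.P 1 ∧ A ≠ S.P (-1)) =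
        Finset.univ \ {S.P 1, S.P (-1)} := by
      ext A; simp
    rw [this, Finset.card_sdiff_of_subset (Finset.subset_univ _), Finset.card_pair S.hP,
      Finset.card_univ]
    have : 1 < Fintype.card ι := Fintype.one_lt_card_iff.2 ⟨_, _, S.hP⟩
    omega
  have h4 := Finset.sum_le_sum fun y (_ : y ∈ Finset.univ) => local_count (S := S) L hL y
  rw [← h1, ← Finset.mul_sum] at h4
  simp only [Fintype.card_prod, Fintype.card_bool] at h4
  omega

end Sw
end VZ


namespace VZ

structure Cfg (E V : Type*) [NormedAddCommGroup E] [InnerProductSpace ℝ E] where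
  p : V → E
  hn : ∀ i, ‖p i‖ = 1
  hh : ∀ i j, 1 / 2 ≤ inner ℝ (p i) (p j)
  inj : ∀ i j, p i = p j → i = j
  o : V
  deg3 : ∀ i, ∃ f : Fin 3 → V, Function.Injective f ∧ ∀ k, inner ℝ (p i) (p (f k)) = 1 / 2

namespace Cfg
variable {E V : Type*} [NormedAddCommGroup E] [InnerProductSpace ℝ E] [Fintype V] (G : Cfg E V)

abbrev Zt := {z : V × V // inner ℝ (G.p z.1) (G.p z.2) = 1 / 2}

def be (i : V) : ℝ := inner ℝ (G.p G.o) (G.p i)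

def u (z : G.Zt) : E := G.be z.1.1 • G.p z.1.2 - G.be z.1.2 • G.p z.1.1

def m (A : V × Bool) (z : G.Zt) : Prop := (z.1.1, true) = A ∨ (z.1.2, false) = A

def sw (z : G.Zt) : G.Zt := ⟨(z.1.2, z.1.1), by rw [real_inner_comm]; exact z.2⟩

noncomputable def K (A : V × Bool) : Set E := cone G.u (G.m A)

variable {G}

lemma be_pos (i : V) : 0 < G.be i := by
  have := G.hh G.o i
  unfold be; linarith

lemma pp (i : V) : inner ℝ (G.p i) (G.p i) = 1 := by
  rw [real_inner_self_eq_norm_sq, G.hn]; norm_num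

lemma in_le {x y : E} (hx : ‖x‖ = 1) (hy : ‖y‖ = 1) : inner ℝ x y ≤ 1 := by
  have := real_inner_le_norm x y
  rwa [hx, hy, one_mul] at this

lemma p_lt {i j : V} (h : i ≠ j) : inner ℝ (G.p i) (G.p j) < 1 := by
  refine lt_of_le_of_ne (in_le (G.hn i) (G.hn j)) fun h1 => h (G.inj _ _ ?_)
  exact (inner_eq_one_iff_of_norm_eq_one (G.hn i) (G.hn j)).1 h1

lemma z_ne (z : G.Zt) : z.1.1 ≠ z.1.2 := by
  intro h
  have := z.2
  rw [h, pp] at this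
  norm_num at this

lemma u_sw (z : G.Zt) : G.u (G.sw z) = - G.u z := by
  simp [u, sw]

lemma o_u (z : G.Zt) : inner ℝ (G.p G.o) (G.u z) = 0 := by
  unfold u
  rw [inner_sub_right, real_inner_smul_right, real_inner_smul_right]
  unfold be; ring

lemma o_K {A : V × Bool} {w : E} (hw : w ∈ G.K A) : inner ℝ (G.p G.o) w = 0 := by
  obtain ⟨c, _, _, rfl⟩ := hw
  rw [inner_sum]
  refine Finset.sum_eq_zero fun z _ => ?_
  rw [real_inner_smul_right, o_u, mul_zero]

lemma neg_K {j : V} {w : E} (t : Bool) (hw : w ∈ G.K (j, t)) : -w ∈ G.K (j, !t) := by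
  obtain ⟨c, h1, h2, rfl⟩ := hw
  refine ⟨fun z => c (G.sw z), fun z => h1 _, fun z hz => h2 _ ?_, ?_⟩
  · revert hz
    cases t <;> simp [m, sw]
  · let e : G.Zt ≃ G.Zt := ⟨G.sw, G.sw, fun z => by simp [sw], fun z => by simp [sw]⟩
    have := Equiv.sum_comp e (fun z => c z • G.u z)
    rw [← this, ← Finset.sum_neg_distrib]
    refine Finset.sum_congr rfl fun z _ => ?_
    change -(c (G.sw z) • G.u (G.sw z)) = _
    rw [u_sw, smul_neg, neg_neg]

lemma lemY {i : V} {w : E} (hw : w ∈ G.K (i, true)) (h0 : w ≠ 0) : ∃ l μ : ℝ, 0 < l ∧ 0 < μ ∧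
    ‖l • w + μ • G.p i‖ = 1 ∧ inner ℝ (l • w + μ • G.p i) (G.p i) = 1 / 2 ∧
    ∀ q : E, ‖q‖ = 1 → (∀ k, 1 / 2 ≤ inner ℝ (G.p k) q) →
      1 / 2 ≤ inner ℝ (l • w + μ • G.p i) q := by
  have hbw := o_K hw
  obtain ⟨c, h1, h2, hwe⟩ := hw
  have h2' : ∀ z : G.Zt, z.1.1 ≠ i → c z = 0 := fun z hz => h2 z (by simpa [m] using hz)
  set M : E := ∑ z, (c z * G.be i) • G.p z.1.2 with hM
  set a : ℝ := ∑ z : G.Zt, c z * G.be i with ha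
  set s : ℝ := ∑ z : G.Zt, c z * G.be z.1.2 with hs
  have hcn : ∀ z : G.Zt, 0 ≤ c z * G.be i := fun z => mul_nonneg (h1 z) (be_pos i).le
  have hwM : w = M - s • G.p i := by
    rw [hwe, hM, hs, Finset.sum_smul, ← Finset.sum_sub_distrib]
    refine Finset.sum_congr rfl fun z _ => ?_
    by_cases hz : z.1.1 = i
    · rw [← hz]; simp only [u, smul_sub, smul_smul]
    · simp [h2' z hz]
  have hMi : inner ℝ M (G.p i) = a / 2 := by
    rw [hM, sum_inner, ha, Finset.sum_div]
    refine Finset.sum_congr rfl fun z _ => ?_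
    by_cases hz : z.1.1 = i
    · rw [real_inner_smul_left, real_inner_comm, ← hz, z.2]; ring
    · simp [h2' z hz]
  have hMn : ‖M‖ ≤ a := by
    refine (norm_sum_le _ _).trans (Finset.sum_le_sum fun z _ => ?_)
    rw [norm_smul, G.hn, mul_one, Real.norm_of_nonneg (hcn z)]
  have hMq : ∀ q : E, (∀ k, 1 / 2 ≤ inner ℝ (G.p k) q) → a / 2 ≤ inner ℝ M q := by
    intro q hq
    rw [hM, sum_inner, ha, Finset.sum_div]
    refine Finset.sum_le_sum fun z _ => ?_
    rw [real_inner_smul_left]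
    nlinarith [hcn z, hq z.1.2]
  have ha0 : 0 ≤ a := Finset.sum_nonneg fun z _ => hcn z
  set M' := M - (a / 2) • G.p i with hM'
  have hM'i : inner ℝ M' (G.p i) = 0 := by
    rw [hM', inner_sub_left, real_inner_smul_left, pp, hMi]; ring
  have hM'n : ‖M'‖ ^ 2 = ‖M‖ ^ 2 - a ^ 2 / 4 := by
    rw [hM', norm_sub_sq_real, real_inner_smul_right, hMi, norm_smul, G.hn, Real.norm_eq_abs,
      mul_one, sq_abs]; ring
  have hM'0 : M' ≠ 0 := by
    intro h
    have hw2 : w = (a / 2 - s) • G.p i := by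
      rw [hwM, sub_smul, sub_eq_zero.1 h]
    rw [hw2, real_inner_smul_right] at hbw
    have := (mul_eq_zero.1 hbw).resolve_right (be_pos i).ne'
    rw [this, zero_smul] at hw2
    exact h0 hw2
  set σ := ‖M'‖ with hσ
  have hσp : 0 < σ := norm_pos_iff.2 hM'0
  have h3 : (0 : ℝ) < √3 := by positivity
  have h33 : √3 * √3 = 3 := Real.mul_self_sqrt (by norm_num)
  have hσa : 2 * σ ≤ √3 * a := by
    refine (sq_le_sq₀ (by positivity) (by positivity)).1 ?_
    have : ‖M‖ ^ 2 ≤ a ^ 2 := by gcongr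
    nlinarith
  set l := √3 / (2 * σ) with hl
  have hlp : 0 < l := by positivity
  have hls : l * σ = √3 / 2 := by rw [hl]; field_simp
  have hla : 1 ≤ l * a := by
    rw [hl, div_mul_eq_mul_div, le_div_iff₀ (by positivity)]; linarith
  have hy : l • w + (1 / 2 + l * (s - a / 2)) • G.p i = l • M' + (1 / 2 : ℝ) • G.p i := by
    rw [hM', hwM]; module
  have hq : ∀ q : E, ‖q‖ = 1 → (∀ k, 1 / 2 ≤ inner ℝ (G.p k) q) →
      1 / 2 ≤ inner ℝ (l • M' + (1 / 2 : ℝ) • G.p i) q := by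
    intro q hqn hqk
    rw [inner_add_left, real_inner_smul_left, real_inner_smul_left, hM', inner_sub_left,
      real_inner_smul_left]
    have e1 := hMq q hqk
    have e2 := in_le (G.hn i) hqn
    have e3 : l * (a / 2) ≤ l * inner ℝ M q := by gcongr
    nlinarith
  refine ⟨l, 1 / 2 + l * (s - a / 2), hlp, ?_, ?_, ?_, ?_⟩
  · have h4 := hq (G.p G.o) (G.hn _) (fun k => G.hh k _)
    rw [← hy, inner_add_left, real_inner_smul_left, real_inner_smul_left, real_inner_comm, hbw,
      mul_zero, zero_add, real_inner_comm] at h4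
    change _ ≤ _ * G.be i at h4
    by_contra hle
    push Not at hle
    nlinarith [be_pos (G := G) i]
  · rw [hy]
    have : ‖l • M' + (1 / 2 : ℝ) • G.p i‖ ^ 2 = 1 := by
      rw [norm_add_sq_real, real_inner_smul_left, real_inner_smul_right, hM'i, norm_smul, norm_smul,
        G.hn, Real.norm_of_nonneg hlp.le, ← hσ, hls]
      norm_num
      nlinarith
    rw [← Real.sqrt_sq (norm_nonneg _), this, Real.sqrt_one]
  · rw [hy, inner_add_left, real_inner_smul_left, real_inner_smul_left, hM'i, pp]; ring
  · rw [hy]; exact hq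

lemma u_ne (z : G.Zt) : G.u z ≠ 0 := by
  intro h
  have h1 := sub_eq_zero.1 h
  have h2 := congrArg (fun x => inner ℝ x (G.p z.1.1)) h1
  have h3 := congrArg (fun x => inner ℝ x (G.p z.1.2)) h1
  simp only [real_inner_smul_left, pp, z.2] at h2 h3
  rw [real_inner_comm, z.2] at h2
  have := be_pos (G := G) z.1.1
  linarith

lemma F1 {i i' : V} (hne : i ≠ i') {w : E} (h1 : w ∈ G.K (i, true)) (h2 : w ∈ G.K (i', true)) :
    w = 0 := by
  have key : ∀ (i i' : V), i ≠ i' → ∀ z : G.Zt, G.m (i, true) z →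
      0 < inner ℝ (G.p i' - G.p i) (G.u z) := by
    intro i i' hne z hz
    have hz : z.1.1 = i := by simpa [m] using hz
    subst hz
    have e1 := p_lt (G := G) hne
    have e2 := G.hh i' z.1.2
    have e3 := be_pos (G := G) z.1.1
    have e4 := be_pos (G := G) z.1.2
    rw [u, inner_sub_left, inner_sub_right, inner_sub_right]
    simp only [real_inner_smul_right, pp, z.2]
    rw [real_inner_comm] at e1
    nlinarith
  refine cone_zero (f := (innerₗ E) (G.p i' - G.p i)) (fun z hz => key i i' hne z hz) h1 ?_
  have := cone_nonneg (f := (innerₗ E) (G.p i - G.p i'))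
    (fun z hz => (key i' i hne.symm z hz).le) h2
  simp only [innerₗ_apply_apply, inner_sub_left] at *
  linarith

lemma w_eq {i j : V} (hij : inner ℝ (G.p i) (G.p j) = 1 / 2) {w : E} (hw : inner ℝ (G.p G.o) w = 0)
    {l μ : ℝ} (hl : 0 < l) (h : l • w + μ • G.p i = G.p j) :
    ∃ c : ℝ, 0 < c ∧ w = c • G.u ⟨(i, j), hij⟩ := by
  have hb : G.be j = μ * G.be i := by
    unfold be
    rw [← h, inner_add_right, real_inner_smul_right, real_inner_smul_right, hw]; ring
  have hi := be_pos (G := G) i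
  refine ⟨(l * G.be i)⁻¹, by positivity, ?_⟩
  have : G.u ⟨(i, j), hij⟩ = (l * G.be i) • w := by
    simp only [u]
    rw [hb, ← h]; module
  rw [this, smul_smul, inv_mul_cancel₀ (by positivity), one_smul]

lemma F2 {i j : V} {w : E} (h1 : w ∈ G.K (i, true)) (h2 : w ∈ G.K (j, false)) (h0 : w ≠ 0) :
    ∃ hij : inner ℝ (G.p i) (G.p j) = 1 / 2, ∃ c : ℝ, 0 < c ∧ w = c • G.u ⟨(i, j), hij⟩ := by
  have hbw := o_K h1
  obtain ⟨l, μ, hl, hμ, yn, yi, yq⟩ := lemY h1 h0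
  obtain ⟨l', μ', hl', hμ', yn', yi', yq'⟩ := lemY (neg_K false h2) (neg_ne_zero.2 h0)
  set y := l • w + μ • G.p i with hy
  set y' := l' • (-w) + μ' • G.p j with hy'
  have hyk : ∀ k, 1 / 2 ≤ inner ℝ y (G.p k) := fun k => yq _ (G.hn k) fun k' => G.hh _ _
  have hyk' : ∀ k, 1 / 2 ≤ inner ℝ y' (G.p k) := fun k => yq' _ (G.hn k) fun k' => G.hh _ _
  have hd := yq y' yn' fun k => by rw [real_inner_comm]; exact hyk' k
  have hrel : (l' * μ) • G.p i + (l * μ') • G.p j = l' • y + l • y' := by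
    rw [hy, hy']; module
  have hc := G.hh i j
  have hg := in_le yn (G.hn j)
  have hk := in_le yn' (G.hn i)
  have r1 := congrArg (fun x => inner ℝ (G.p i) x) hrel
  have r2 := congrArg (fun x => inner ℝ (G.p j) x) hrel
  have r3 := congrArg (fun x => inner ℝ y x) hrel
  have r4 := congrArg (fun x => inner ℝ y' x) hrel
  have n1 : inner ℝ y y = 1 := by rw [real_inner_self_eq_norm_sq, yn]; norm_num
  have n2 : inner ℝ y' y' = 1 := by rw [real_inner_self_eq_norm_sq, yn']; norm_num
  simp only [inner_add_right, real_inner_smul_right, pp, n1, n2] at r1 r2 r3 r4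
  rw [real_inner_comm y (G.p i), real_inner_comm y' (G.p i), yi] at r1
  rw [real_inner_comm y (G.p j), real_inner_comm y' (G.p j), yi', real_inner_comm] at r2
  rw [yi] at r3
  rw [yi', real_inner_comm y y'] at r4
  set c := inner ℝ (G.p i) (G.p j)
  set g := inner ℝ y (G.p j) with hgdef
  set k := inner ℝ y' (G.p i)
  set d := inner ℝ y y'
  have pα : 0 < l' * μ := by positivity
  have pγ : 0 < l * μ' := by positivity
  set α := l' * μ
  set γ := l * μ'
  have q1 : (α + l') / 2 = γ * (g - c) + l * (k - d) := by linarith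
  have q2 : (γ + l) / 2 = α * (k - c) + l' * (g - d) := by linarith
  have s1 : l * (k - d) ≤ l * (1 / 2) := by gcongr; linarith
  have s2 : α * (k - c) ≤ α * (1 / 2) := by gcongr; linarith
  have s3 : l' * (g - d) ≤ l' * (1 / 2) := by gcongr; linarith
  have s4 : γ * (1 / 2) ≤ γ * (g - c) := by linarith
  have s5 := le_of_mul_le_mul_left s4 pγ
  have hc2 : c = 1 / 2 := by linarith
  have hg1 : g = 1 := by linarith
  have hyj : y = G.p j := (inner_eq_one_iff_of_norm_eq_one yn (G.hn j)).1 hg1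
  exact ⟨hc2, w_eq hc2 hbw hl hyj⟩

lemma ptr {i : V} {w : E} (h1 : w ∈ G.K (i, true)) (h2 : -w ∈ G.K (i, true)) : w = 0 := by
  by_contra h0
  have h3 := neg_K true h2
  rw [neg_neg] at h3
  obtain ⟨h, _⟩ := F2 h1 h3 h0
  rw [pp] at h
  norm_num at h

lemma Kadd {A : V × Bool} {a b : E} (ha : a ∈ G.K A) (hb : b ∈ G.K A) : a + b ∈ G.K A :=
  cone_add ha hb
lemma Ksmul {A : V × Bool} {a : E} {c : ℝ} (hc : 0 ≤ c) (ha : a ∈ G.K A) : c • a ∈ G.K A :=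
  cone_smul hc ha
lemma Kgen {A : V × Bool} {z : G.Zt} (hz : G.m A z) : G.u z ∈ G.K A := cone_gen hz

lemma other (i j : V) : ∃ l, l ≠ i ∧ inner ℝ (G.p j) (G.p l) = 1 / 2 := by
  obtain ⟨f, hf, h⟩ := G.deg3 j
  by_cases h0 : f 0 = i
  · refine ⟨f 1, fun h1 => ?_, h 1⟩
    have := hf (h0.trans h1.symm)
    simp at this
  · exact ⟨f 0, h0, h 0⟩

lemma F3 {i j : V} (hij : inner ℝ (G.p i) (G.p j) = 1 / 2) {w1 w2 : E} (h1 : w1 ∈ G.K (i, true))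
    (h2 : w2 ∈ G.K (i, true)) {c : ℝ} (h : w1 + w2 = c • G.u ⟨(i, j), hij⟩) :
    ∃ d : ℝ, 0 ≤ d ∧ w1 = d • G.u ⟨(i, j), hij⟩ := by
  by_cases z1 : w1 = 0
  · exact ⟨0, le_rfl, by simp [z1]⟩
  have hgen : G.u ⟨(i, j), hij⟩ ∈ G.K (i, true) := Kgen (Or.inl rfl)
  have hc : 0 < c := by
    by_contra hle
    push Not at hle
    have e0 : w1 + w2 = 0 := by
      apply ptr (Kadd h1 h2)
      rw [h, ← neg_smul]
      exact Ksmul (by linarith) hgen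
    apply z1
    apply ptr h1
    rw [neg_eq_of_add_eq_zero_right e0]; exact h2
  by_cases z2 : w2 = 0
  · exact ⟨c, hc.le, by rw [← h, z2, add_zero]⟩
  obtain ⟨l1, μ1, hl1, hμ1, yn1, yi1, yq1⟩ := lemY h1 z1
  obtain ⟨l2, μ2, hl2, hμ2, yn2, yi2, yq2⟩ := lemY h2 z2
  set y1 := l1 • w1 + μ1 • G.p i with hy1
  set y2 := l2 • w2 + μ2 • G.p i with hy2
  have hi := be_pos (G := G) i
  have hsum : (c * G.be i) • G.p j = l1⁻¹ • y1 + l2⁻¹ • y2 +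
      (c * G.be j - l1⁻¹ * μ1 - l2⁻¹ * μ2) • G.p i := by
    have e1 : l1⁻¹ • y1 = w1 + (l1⁻¹ * μ1) • G.p i := by
      rw [hy1, smul_add, smul_smul, smul_smul, inv_mul_cancel₀ hl1.ne', one_smul]
    have e2 : l2⁻¹ • y2 = w2 + (l2⁻¹ * μ2) • G.p i := by
      rw [hy2, smul_add, smul_smul, smul_smul, inv_mul_cancel₀ hl2.ne', one_smul]
    have e3 : (c * G.be i) • G.p j = w1 + w2 + (c * G.be j) • G.p i := by
      rw [h]; simp only [u]; module
    rw [e1, e2, e3]; module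
  set ν := c * G.be j - l1⁻¹ * μ1 - l2⁻¹ * μ2
  set κ := c * G.be i with hκ
  have hκ0 : 0 < κ := by positivity
  have p1 : 0 < l1⁻¹ := by positivity
  have p2 : 0 < l2⁻¹ := by positivity
  set a1 := l1⁻¹
  set a2 := l2⁻¹
  obtain ⟨l, hli, hjl⟩ := other (G := G) i j
  have r1 := congrArg (fun x => inner ℝ x (G.p i)) hsum
  have r2 := congrArg (fun x => inner ℝ x (G.p j)) hsum
  have r3 := congrArg (fun x => inner ℝ x (G.p l)) hsum
  simp only [inner_add_left, real_inner_smul_left, pp, yi1, yi2, hij, hjl] at r1 r2 r3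
  rw [real_inner_comm, hij] at r1
  have g1 := in_le yn1 (G.hn j)
  have g2 := in_le yn2 (G.hn j)
  have k1 := yq1 (G.p l) (G.hn l) fun k => G.hh _ _
  have k2 := yq2 (G.p l) (G.hn l) fun k => G.hh _ _
  have il := p_lt (G := G) hli.symm
  have b1 : a1 * inner ℝ y1 (G.p j) ≤ a1 * 1 := by gcongr
  have b2 : a2 * inner ℝ y2 (G.p j) ≤ a2 * 1 := by gcongr
  have b3 : a1 * (1 / 2) ≤ a1 * inner ℝ y1 (G.p l) := by gcongr
  have b4 : a2 * (1 / 2) ≤ a2 * inner ℝ y2 (G.p l) := by gcongr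
  have hν1 : ν ≤ 0 := by linarith
  have hν2 : 0 ≤ ν := by
    by_contra hlt
    push Not at hlt
    nlinarith
  have hν : ν = 0 := le_antisymm hν1 hν2
  rw [hν] at r1 r2
  have b5 : a1 * 1 ≤ a1 * inner ℝ y1 (G.p j) := by linarith
  have b6 := le_of_mul_le_mul_left b5 p1
  have hyj : y1 = G.p j :=
    (inner_eq_one_iff_of_norm_eq_one yn1 (G.hn j)).1 (le_antisymm g1 b6)
  obtain ⟨d, hd, hd'⟩ := w_eq hij (o_K h1) hl1 hyj
  exact ⟨d, hd.le, hd'⟩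

lemma par {z z' : G.Zt} {d : ℝ} (hd : 0 ≤ d) (h : G.u z = d • G.u z') : z = z' := by
  have e1 : z.1.1 = z'.1.1 := by
    by_contra hne
    apply u_ne z
    exact F1 hne (Kgen (Or.inl rfl)) (h ▸ Ksmul hd (Kgen (Or.inl rfl)))
  have e2 : z.1.2 = z'.1.2 := by
    by_contra hne
    apply u_ne z
    have k1 : -G.u z ∈ G.K (z.1.2, true) := neg_K false (Kgen (Or.inr rfl))
    have k2 : -G.u z ∈ G.K (z'.1.2, true) := neg_K false (h ▸ Ksmul hd (Kgen (Or.inr rfl)))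
    exact neg_eq_zero.1 (F1 hne k1 k2)
  exact Subtype.ext (Prod.ext e1 e2)

lemma K2 {A B : V × Bool} (hAB : A ≠ B) {w : E} (h1 : w ∈ G.K A) (h2 : w ∈ G.K B) (h0 : w ≠ 0) :
    ∃ z, G.m A z ∧ G.m B z ∧ ∃ c : ℝ, 0 < c ∧ w = c • G.u z := by
  obtain ⟨i, s⟩ := A
  obtain ⟨j, t⟩ := B
  cases s <;> cases t
  · have hne : i ≠ j := fun h => hAB (by rw [h])
    exact (h0 (neg_eq_zero.1 (F1 hne (neg_K false h1) (neg_K false h2)))).elim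
  · obtain ⟨hij, hc⟩ := F2 h2 h1 h0
    exact ⟨_, Or.inr rfl, Or.inl rfl, hc⟩
  · obtain ⟨hij, hc⟩ := F2 h1 h2 h0
    exact ⟨_, Or.inl rfl, Or.inr rfl, hc⟩
  · have hne : i ≠ j := fun h => hAB (by rw [h])
    exact (h0 (F1 hne h1 h2)).elim

lemma pt {A : V × Bool} {w : E} (h1 : w ∈ G.K A) (h2 : -w ∈ G.K A) : w = 0 := by
  obtain ⟨i, s⟩ := A
  cases s
  · exact neg_eq_zero.1 (ptr (neg_K false h1) (neg_K false h2))
  · exact ptr h1 h2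

lemma ext {A : V × Bool} {z : G.Zt} (hz : G.m A z) {w1 w2 : E} (h1 : w1 ∈ G.K A) (h2 : w2 ∈ G.K A)
    {c : ℝ} (h : w1 + w2 = c • G.u z) : ∃ d : ℝ, 0 ≤ d ∧ w1 = d • G.u z := by
  rcases hz with rfl | rfl
  · exact F3 z.2 h1 h2 h
  · have e : -w1 + -w2 = c • G.u (G.sw z) := by
      rw [u_sw, smul_neg, ← h]; abel
    obtain ⟨d, hd, hd'⟩ := F3 (G.sw z).2 (neg_K false h1) (neg_K false h2) e
    refine ⟨d, hd, ?_⟩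
    change -w1 = d • G.u (G.sw z) at hd'
    rw [u_sw, smul_neg] at hd'
    exact neg_injective hd'

end Cfg
end VZ


namespace VZ

lemma cone_map {V V' Z : Type*} [AddCommGroup V] [Module ℝ V] [AddCommGroup V'] [Module ℝ V']
    [Fintype Z] {u : Z → V} {m : Z → Prop} (Φ : V →ₗ[ℝ] V') {w : V} (hw : w ∈ cone u m) :
    Φ w ∈ cone (fun z => Φ (u z)) m := by
  obtain ⟨c, h1, h2, rfl⟩ := hw
  exact ⟨c, h1, h2, by simp⟩

lemma cone_unmap {V V' Z : Type*} [AddCommGroup V] [Module ℝ V] [AddCommGroup V'] [Module ℝ V']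
    [Fintype Z] {u : Z → V} {m : Z → Prop} (Φ : V →ₗ[ℝ] V') {w : V'}
    (hw : w ∈ cone (fun z => Φ (u z)) m) : ∃ x ∈ cone u m, Φ x = w := by
  obtain ⟨c, h1, h2, rfl⟩ := hw
  exact ⟨_, ⟨c, h1, h2, rfl⟩, by simp⟩

namespace Cfg
variable {E V : Type*} [NormedAddCommGroup E] [InnerProductSpace ℝ E] [Fintype V] {G : Cfg E V}

lemma ind_aux {i : V} {z1 z2 z3 : G.Zt} (h1 : z1.1.1 = i) (h2 : z2.1.1 = i) (h3 : z3.1.1 = i)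
    (h13 : z1 ≠ z3) (h23 : z2 ≠ z3) {x y c : ℝ} (hx : 0 ≤ x) (hy : 0 ≤ y)
    (h : x • G.u z1 + y • G.u z2 = c • G.u z3) : x = 0 ∧ y = 0 ∧ c = 0 := by
  have k1 : x • G.u z1 ∈ G.K (i, true) := Ksmul hx (Kgen (Or.inl (by rw [h1])))
  have k2 : y • G.u z2 ∈ G.K (i, true) := Ksmul hy (Kgen (Or.inl (by rw [h2])))
  have key : ∀ (x : ℝ) (z : G.Zt), 0 ≤ x → z ≠ z3 → (∃ d : ℝ, 0 ≤ d ∧ x • G.u z = d • G.u z3) →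
      x = 0 := by
    rintro x z hx hz ⟨d, hd, he⟩
    by_contra hx0
    apply hz
    apply par (d := x⁻¹ * d) (by positivity)
    rw [mul_smul, ← he, smul_smul, inv_mul_cancel₀ hx0, one_smul]
  have m3 : G.m (i, true) z3 := Or.inl (by rw [h3])
  have hx0 := key x z1 hx h13 (ext m3 k1 k2 h)
  have hy0 := key y z2 hy h23 (ext m3 k2 k1 (by rw [add_comm]; exact h))
  refine ⟨hx0, hy0, ?_⟩
  rw [hx0, hy0, zero_smul, zero_smul, add_zero] at h
  exact (smul_eq_zero.1 h.symm).resolve_right (u_ne z3)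

lemma ind {i : V} {z1 z2 z3 : G.Zt} (h1 : z1.1.1 = i) (h2 : z2.1.1 = i) (h3 : z3.1.1 = i)
    (h12 : z1 ≠ z2) (h13 : z1 ≠ z3) (h23 : z2 ≠ z3) {x y c : ℝ}
    (h : x • G.u z1 + y • G.u z2 + c • G.u z3 = 0) : x = 0 ∧ y = 0 ∧ c = 0 := by
  have e12 : x • G.u z1 + y • G.u z2 = (-c) • G.u z3 := by
    rw [neg_smul]; exact eq_neg_of_add_eq_zero_left h
  have e12' : (-x) • G.u z1 + (-y) • G.u z2 = c • G.u z3 := by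
    rw [← neg_neg c, neg_smul (-c), ← e12]; module
  have e13 : x • G.u z1 + c • G.u z3 = (-y) • G.u z2 := by
    rw [neg_smul]; apply eq_neg_of_add_eq_zero_left; rw [← h]; abel
  have e13' : (-x) • G.u z1 + (-c) • G.u z3 = y • G.u z2 := by
    rw [← neg_neg y, neg_smul (-y), ← e13]; module
  have e23 : y • G.u z2 + c • G.u z3 = (-x) • G.u z1 := by
    rw [neg_smul]; apply eq_neg_of_add_eq_zero_left; rw [← h]; abel
  have e23' : (-y) • G.u z2 + (-c) • G.u z3 = x • G.u z1 := by
    rw [← neg_neg x, neg_smul (-x), ← e23]; module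
  have nn : ∀ {a : ℝ}, a ≤ 0 → 0 ≤ -a := fun h => by linarith
  rcases le_total 0 x with sx | sx <;> rcases le_total 0 y with sy | sy
  · have := ind_aux h1 h2 h3 h13 h23 sx sy e12
    refine ⟨this.1, this.2.1, by linarith [this.2.2]⟩
  · rcases le_total 0 c with sc | sc
    · have := ind_aux h1 h3 h2 h12 h23.symm sx sc e13
      refine ⟨this.1, by linarith [this.2.2], this.2.1⟩
    · have := ind_aux h2 h3 h1 h12.symm h13.symm (nn sy) (nn sc) e23'
      refine ⟨this.2.2, by linarith [this.1], by linarith [this.2.1]⟩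
  · rcases le_total 0 c with sc | sc
    · have := ind_aux h2 h3 h1 h12.symm h13.symm sy sc e23
      refine ⟨by linarith [this.2.2], this.1, this.2.1⟩
    · have := ind_aux h1 h3 h2 h12 h23.symm (nn sx) (nn sc) e13'
      refine ⟨by linarith [this.1], this.2.2, by linarith [this.2.1]⟩
  · have := ind_aux h1 h2 h3 h13 h23 (nn sx) (nn sy) e12'
    refine ⟨by linarith [this.1], by linarith [this.2.1], this.2.2⟩

lemma coords (hE : Module.finrank ℝ E = 4) : ∃ (z1 z2 z3 : G.Zt) (c1 c2 c3 : E →ₗ[ℝ] ℝ),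
    z1.1.1 = G.o ∧ z2.1.1 = G.o ∧ z3.1.1 = G.o ∧
    (∀ w, inner ℝ (G.p G.o) w = 0 → w = c1 w • G.u z1 + c2 w • G.u z2 + c3 w • G.u z3) ∧
    (∀ a b c : ℝ, c1 (a • G.u z1 + b • G.u z2 + c • G.u z3) = a ∧
      c2 (a • G.u z1 + b • G.u z2 + c • G.u z3) = b ∧
      c3 (a • G.u z1 + b • G.u z2 + c • G.u z3) = c) := by
  obtain ⟨f, hf, h⟩ := G.deg3 G.o
  let z : Fin 3 → G.Zt := fun k => ⟨(G.o, f k), h k⟩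
  have hz : ∀ k l, k ≠ l → z k ≠ z l := by
    intro k l hkl h
    apply hkl
    apply hf
    have := congrArg (fun x : G.Zt => x.1.2) h
    exact this
  let F : Fin 4 → E := ![G.p G.o, G.u (z 0), G.u (z 1), G.u (z 2)]
  have hli : LinearIndependent ℝ F := by
    rw [Fintype.linearIndependent_iff]
    intro g hg
    simp only [Fin.sum_univ_four, F, Matrix.cons_val] at hg
    have h0 : g 0 = 0 := by
      have := congrArg (fun x => inner ℝ (G.p G.o) x) hg
      simpa only [inner_add_right, real_inner_smul_right, o_u, pp, mul_zero, mul_one, add_zero,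
        inner_zero_right] using this
    rw [h0, zero_smul, zero_add] at hg
    obtain ⟨a, b, c⟩ := ind (i := G.o) rfl rfl rfl (hz 0 1 (by decide)) (hz 0 2 (by decide))
      (hz 1 2 (by decide)) hg
    intro i
    fin_cases i
    · exact h0
    · exact a
    · exact b
    · exact c
  let B := basisOfLinearIndependentOfCardEqFinrank hli (by simp [hE])
  have hB : ∀ k, B k = F k := fun k => by simp [B]
  have hs : ∀ w, w = B.coord 0 w • G.p G.o + B.coord 1 w • G.u (z 0) + B.coord 2 w • G.u (z 1) +
      B.coord 3 w • G.u (z 2) := by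
    intro w
    have := B.sum_repr w
    rw [Fin.sum_univ_four] at this
    simp only [hB, F, Matrix.cons_val] at this
    exact this.symm
  refine ⟨z 0, z 1, z 2, B.coord 1, B.coord 2, B.coord 3, rfl, rfl, rfl, ?_, ?_⟩
  · intro w hw
    have h1 := hs w
    have h0 : B.coord 0 w = 0 := by
      rw [h1] at hw
      simpa only [inner_add_right, real_inner_smul_right, o_u, pp, mul_zero, mul_one, add_zero,
        inner_zero_right] using hw
    rw [h0, zero_smul, zero_add] at h1
    exact h1
  · intro a b c
    have e1 : G.u (z 0) = B 1 := by rw [hB]; rfl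
    have e2 : G.u (z 1) = B 2 := by rw [hB]; rfl
    have e3 : G.u (z 2) = B 3 := by rw [hB]; rfl
    rw [e1, e2, e3]
    simp

lemma gp {Z : Type*} [Finite Z] (n : Z → ℝ × ℝ × ℝ) : ∃ t : ℝ, 0 < t ∧ ∀ z,
    (n z).1 + (n z).2.1 * t + (n z).2.2 * t ^ 2 = 0 → n z = 0 := by
  have : Fintype Z := Fintype.ofFinite Z
  let q : Z → Polynomial ℝ := fun z => Polynomial.C (n z).1 + Polynomial.C (n z).2.1 * Polynomial.X +
    Polynomial.C (n z).2.2 * Polynomial.X ^ 2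
  obtain ⟨t, ht, hn⟩ := (Set.Ioi_infinite (0 : ℝ)).exists_notMem_finset
    (Finset.univ.biUnion fun z => (q z).roots.toFinset)
  refine ⟨t, ht, fun z hz => ?_⟩
  have hq : q z = 0 := by
    by_contra h0
    apply hn
    rw [Finset.mem_biUnion]
    refine ⟨z, Finset.mem_univ _, ?_⟩
    rw [Multiset.mem_toFinset, Polynomial.mem_roots h0, Polynomial.IsRoot]
    simpa [q] using hz
  have c0 := congrArg (fun p => Polynomial.coeff p 0) hq
  have c1 := congrArg (fun p => Polynomial.coeff p 1) hq
  have c2 := congrArg (fun p => Polynomial.coeff p 2) hq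
  simp [q, Polynomial.coeff_X, Polynomial.coeff_C] at c0 c1 c2
  ext
  · exact c0
  · exact c1
  · exact c2

theorem count (hE : Module.finrank ℝ E = 4) : Fintype.card G.Zt + 4 ≤ 4 * Fintype.card V := by
  obtain ⟨z1, z2, z3, c1, c2, c3, o1, o2, o3, hs, hc⟩ := coords (G := G) hE
  obtain ⟨t, ht, htn⟩ := gp (fun q : G.Zt × G.Zt =>
    (c2 (G.u q.1) * c3 (G.u q.2) - c3 (G.u q.1) * c2 (G.u q.2),
     c3 (G.u q.1) * c1 (G.u q.2) - c1 (G.u q.1) * c3 (G.u q.2),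
     c1 (G.u q.1) * c2 (G.u q.2) - c2 (G.u q.1) * c1 (G.u q.2)))
  let Φ : E →ₗ[ℝ] R3 := (c2 - t • c1).prod ((c3 - t ^ 2 • c1).prod c1)
  have hΦ : ∀ w, Φ w = (c2 w - t * c1 w, c3 w - t ^ 2 * c1 w, c1 w) := fun w => rfl
  have hinj0 : ∀ w, inner ℝ (G.p G.o) w = 0 → Φ w = 0 → w = 0 := by
    intro w hw h
    rw [hΦ] at h
    have e1 : c1 w = 0 := congrArg (fun x : R3 => x.2.2) h
    have e2 : c2 w - t * c1 w = 0 := congrArg (fun x : R3 => x.1) h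
    have e3 : c3 w - t ^ 2 * c1 w = 0 := congrArg (fun x : R3 => x.2.1) h
    rw [e1] at e2 e3
    have e2' : c2 w = 0 := by linarith
    have e3' : c3 w = 0 := by linarith
    rw [hs w hw, e1, e2', e3']; simp
  have hinj : ∀ w w', inner ℝ (G.p G.o) w = 0 → inner ℝ (G.p G.o) w' = 0 → Φ w = Φ w' → w = w' := by
    intro w w' h h' he
    apply sub_eq_zero.1
    apply hinj0
    · rw [inner_sub_right, h, h', sub_zero]
    · rw [map_sub, he, sub_self]
  have hgen : ∀ z z' : G.Zt, z ≠ z' → dt (Φ (G.u z)) (Φ (G.u z')) = 0 →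
      ∃ c : ℝ, 0 < c ∧ G.u z' = -(c • G.u z) := by
    intro z z' hne hd
    have h0 := htn (z, z') (by rw [← hd]; simp only [hΦ, dt]; ring)
    have n1 := congrArg (fun x : R3 => x.1) h0
    have n2 := congrArg (fun x : R3 => x.2.1) h0
    have n3 := congrArg (fun x : R3 => x.2.2) h0
    simp only [Prod.fst_zero, Prod.snd_zero] at n1 n2 n3
    have hz := hs _ (o_u z)
    have hz' := hs _ (o_u z')
    set a1 := c1 (G.u z)
    set a2 := c2 (G.u z)
    set a3 := c3 (G.u z)
    set b1 := c1 (G.u z')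
    set b2 := c2 (G.u z')
    set b3 := c3 (G.u z')
    have hpar : ∃ d : ℝ, b1 = d * a1 ∧ b2 = d * a2 ∧ b3 = d * a3 := by
      by_cases k1 : a1 = 0
      · by_cases k2 : a2 = 0
        · by_cases k3 : a3 = 0
          · rw [k1, k2, k3] at hz
            exact (u_ne z (by rw [hz]; simp)).elim
          · refine ⟨b3 / a3, ?_, ?_, ?_⟩ <;> field_simp <;> linarith
        · refine ⟨b2 / a2, ?_, ?_, ?_⟩ <;> field_simp <;> linarith
      · refine ⟨b1 / a1, ?_, ?_, ?_⟩ <;> field_simp <;> linarith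
    obtain ⟨d, d1, d2, d3⟩ := hpar
    have he : G.u z' = d • G.u z := by
      rw [hz', d1, d2, d3]
      conv_rhs => rw [hz]
      module
    have hdn : d < 0 := by
      by_contra hge
      push Not at hge
      exact hne (par hge he).symm
    exact ⟨-d, by linarith, by rw [he]; simp⟩
  have hdeg : ∀ A z, G.m A z → ∃ z', z' ≠ z ∧ G.m A z' := by
    rintro A z (rfl | rfl)
    · obtain ⟨l, hl, hl'⟩ := other (G := G) z.1.2 z.1.1
      exact ⟨⟨(z.1.1, l), hl'⟩, fun h => hl (congrArg (fun x : G.Zt => x.1.2) h), Or.inl rfl⟩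
    · obtain ⟨l, hl, hl'⟩ := other (G := G) z.1.1 z.1.2
      exact ⟨⟨(l, z.1.2), by rw [real_inner_comm]; exact hl'⟩,
        fun h => hl (congrArg (fun x : G.Zt => x.1.1) h), Or.inr rfl⟩
  have hpole : ∀ W : E, inner ℝ (G.p G.o) W = 0 → ∃ s : ℝ, 0 < s ∧
      W + s • (G.u z1 + t • G.u z2 + t ^ 2 • G.u z3) ∈ G.K (G.o, true) := by
    intro W hW
    obtain ⟨s, s0, s1, s2, s3⟩ : ∃ s : ℝ, 0 < s ∧ 0 ≤ c1 W + s ∧ 0 ≤ c2 W + s * t ∧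
        0 ≤ c3 W + s * t ^ 2 := by
      refine ⟨1 + |c1 W| + |c2 W| / t + |c3 W| / t ^ 2, by positivity, ?_, ?_, ?_⟩
      · have := neg_abs_le (c1 W)
        have : 0 ≤ |c2 W| / t + |c3 W| / t ^ 2 := by positivity
        linarith
      · have e : (1 + |c1 W| + |c2 W| / t + |c3 W| / t ^ 2) * t =
            (1 + |c1 W| + |c3 W| / t ^ 2) * t + |c2 W| := by field_simp; ring
        have := neg_abs_le (c2 W)
        have : 0 ≤ (1 + |c1 W| + |c3 W| / t ^ 2) * t := by positivity
        rw [e]; linarith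
      · have e : (1 + |c1 W| + |c2 W| / t + |c3 W| / t ^ 2) * t ^ 2 =
            (1 + |c1 W| + |c2 W| / t) * t ^ 2 + |c3 W| := by field_simp
        have := neg_abs_le (c3 W)
        have : 0 ≤ (1 + |c1 W| + |c2 W| / t) * t ^ 2 := by positivity
        rw [e]; linarith
    refine ⟨s, s0, ?_⟩
    have e : W + s • (G.u z1 + t • G.u z2 + t ^ 2 • G.u z3) =
        (c1 W + s) • G.u z1 + (c2 W + s * t) • G.u z2 + (c3 W + s * t ^ 2) • G.u z3 := by
      conv_lhs => rw [hs W hW]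
      module
    rw [e]
    exact Kadd (Kadd (Ksmul s1 (Kgen (Or.inl (by rw [o1])))) (Ksmul s2 (Kgen (Or.inl (by rw [o2])))))
      (Ksmul s3 (Kgen (Or.inl (by rw [o3]))))
  have hsurj : ∀ w : R3, ∃ W : E, inner ℝ (G.p G.o) W = 0 ∧ Φ W = w := by
    rintro ⟨x, y, h⟩
    refine ⟨h • G.u z1 + (x + t * h) • G.u z2 + (y + t ^ 2 * h) • G.u z3, ?_, ?_⟩
    · simp only [inner_add_right, real_inner_smul_right, o_u, mul_zero, add_zero]
    · obtain ⟨e1, e2, e3⟩ := hc h (x + t * h) (y + t ^ 2 * h)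
      rw [hΦ, e1, e2, e3]; simp
  have hΦN : Φ (G.u z1 + t • G.u z2 + t ^ 2 • G.u z3) = (0, 0, 1) := by
    obtain ⟨e1, e2, e3⟩ := hc 1 t (t ^ 2)
    rw [one_smul] at e1 e2 e3
    rw [hΦ, e1, e2, e3]; simp
  let S : Sw G.Zt (V × Bool) :=
    { v := fun z => Φ (G.u z)
      r := fun z => (z.1.1, true)
      b := fun z => (z.1.2, false)
      col := fun A => A.2
      colr := fun z => rfl
      colb := fun z => rfl
      inj := fun z z' h h' => Subtype.ext (Prod.ext (Prod.mk.inj h).1 (Prod.mk.inj h').1)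
      P := fun t => (G.o, decide (0 < t))
      hP := by
        intro h
        have := congrArg Prod.snd h
        norm_num at this
      K2 := by
        intro A B hAB w h1 h2 h0
        obtain ⟨x, hx, rfl⟩ := cone_unmap Φ h1
        obtain ⟨y, hy, hxy⟩ := cone_unmap Φ h2
        obtain rfl := hinj _ _ (o_K (A := B) hy) (o_K (A := A) hx) hxy
        obtain ⟨z, m1, m2, c, hc, he⟩ := K2 hAB hx hy (fun h => h0 (by rw [h, map_zero]))
        exact ⟨z, m1, m2, c, hc, by rw [he, map_smul]⟩
      ext := by
        intro A z hz w1 w2 h1 h2 c h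
        obtain ⟨x, hx, rfl⟩ := cone_unmap Φ h1
        obtain ⟨y, hy, rfl⟩ := cone_unmap Φ h2
        rw [← map_add, ← map_smul] at h
        have ho : inner ℝ (G.p G.o) (c • G.u z) = 0 := by rw [real_inner_smul_right, o_u, mul_zero]
        have h := hinj _ _ (o_K (A := A) (Kadd hx hy)) ho h
        obtain ⟨d, hd, he⟩ := ext hz hx hy h
        exact ⟨d, hd, by rw [he, map_smul]⟩
      pt := by
        intro A w h1 h2
        obtain ⟨x, hx, rfl⟩ := cone_unmap Φ h1
        obtain ⟨y, hy, hxy⟩ := cone_unmap Φ h2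
        rw [← map_neg] at hxy
        have ho : inner ℝ (G.p G.o) (-x) = 0 := by rw [inner_neg_right, o_K (A := A) hx, neg_zero]
        obtain rfl := hinj _ _ (o_K (A := A) hy) ho hxy
        rw [pt (A := A) hx hy, map_zero]
      pole := by
        intro τ hτ w
        obtain ⟨W, hW, rfl⟩ := hsurj w
        rcases hτ with rfl | rfl
        · obtain ⟨s, s0, hK⟩ := hpole W hW
          refine ⟨s, s0, ?_⟩
          have := cone_map Φ hK
          rw [map_add, map_smul, hΦN] at this
          have e : (decide ((0 : ℝ) < 1)) = true := by simp
          have e2 : Φ W + ((0, 0, 1 * s) : R3) = Φ W + s • ((0, 0, 1) : R3) := by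
            congr 1
            ext <;> simp
          rw [e, e2]
          exact this
        · obtain ⟨s, s0, hK⟩ := hpole (-W) (by rw [inner_neg_right, hW, neg_zero])
          refine ⟨s, s0, ?_⟩
          have := cone_map Φ (neg_K true hK)
          rw [map_neg, map_add, map_smul, hΦN, map_neg] at this
          have e : (decide ((0 : ℝ) < -1)) = false := by norm_num
          have e2 : Φ W + ((0, 0, -1 * s) : R3) = -(-Φ W + s • ((0, 0, 1) : R3)) := by
            ext <;> simp
            ring
          rw [e, e2]
          exact this
      npole := by
        rintro z ⟨h1, h2⟩
        have e : (decide ((0 : ℝ) < -1)) = false := by norm_num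
        have e' : (decide ((0 : ℝ) < 1)) = true := by simp
        rw [e] at h2
        rw [e'] at h1
        have k1 : z.1.1 = G.o := by simpa using h1
        have k2 : z.1.2 = G.o := by simpa using h2
        exact z_ne z (k1.trans k2.symm)
      gen := by
        intro z z' hne hd
        obtain ⟨c, hc, he⟩ := hgen z z' hne hd
        exact ⟨c, hc, by rw [he, map_neg, map_smul]⟩
      xy := by
        intro z
        by_contra hcon
        push Not at hcon
        obtain ⟨z', hne, hm⟩ := hdeg (z.1.1, true) z (Or.inl rfl)
        obtain ⟨c, hc, he⟩ := hgen z z' hne.symm (by unfold dt; rw [hcon.1, hcon.2]; ring)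
        have := pt (A := (z.1.1, true)) (w := c • G.u z) (Ksmul hc.le (Kgen (Or.inl rfl)))
          (by rw [← he]; exact Kgen hm)
        exact smul_ne_zero hc.ne' (u_ne z) this
      ne := by
        rintro ⟨i, s⟩
        obtain ⟨l, hl, hl'⟩ := other (G := G) i i
        cases s
        · exact ⟨⟨(l, i), by rw [real_inner_comm]; exact hl'⟩, Or.inr rfl⟩
        · exact ⟨⟨(i, l), hl'⟩, Or.inl rfl⟩
      deg := hdeg }
  have := S.sweep
  rw [Fintype.card_prod, Fintype.card_bool] at this
  omega

end Cfg
end VZ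

namespace VZ

abbrev E4 := EuclideanSpace ℝ (Fin 4)

theorem local_count (P : Finset E4) : P.Nonempty → (∀ x ∈ P, ‖x‖ = 1) →
    (∀ x ∈ P, ∀ y ∈ P, (1/2 : ℝ) ≤ inner ℝ x y) →
    ((P ×ˢ P).filter (fun z => inner ℝ z.1 z.2 = (1/2 : ℝ))).card + 4 ≤ 4 * P.card := by
  induction P using Finset.strongInduction with
  | H P ih =>
  intro hP hn hh
  have hself : ∀ x ∈ P, inner ℝ x x ≠ (1/2 : ℝ) := by
    intro x hx
    rw [real_inner_self_eq_norm_sq, hn x hx]; norm_num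
  by_cases hdeg : ∃ x ∈ P, (P.filter (fun y => inner ℝ x y = (1/2 : ℝ))).card ≤ 2
  · obtain ⟨x, hx, hd⟩ := hdeg
    have hcard := Finset.card_erase_add_one hx
    set N := P.filter (fun y => inner ℝ x y = (1/2 : ℝ)) with hN
    have hsub : (P ×ˢ P).filter (fun z => inner ℝ z.1 z.2 = (1/2 : ℝ)) ⊆
        ((P.erase x ×ˢ P.erase x).filter (fun z => inner ℝ z.1 z.2 = (1/2 : ℝ))) ∪
          (({x} ×ˢ N) ∪ (N ×ˢ {x})) := by
      rintro ⟨a, b⟩ h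
      simp only [Finset.mem_filter, Finset.mem_product] at h
      obtain ⟨⟨ha, hb⟩, hab⟩ := h
      simp only [Finset.mem_union, Finset.mem_filter, Finset.mem_product, Finset.mem_erase,
        Finset.mem_singleton, hN]
      by_cases h1 : a = x
      · subst h1; right; left; exact ⟨rfl, hb, hab⟩
      · by_cases h2 : b = x
        · subst h2; right; right; exact ⟨⟨ha, by rw [real_inner_comm]; exact hab⟩, rfl⟩
        · left; exact ⟨⟨⟨h1, ha⟩, h2, hb⟩, hab⟩
    rcases (P.erase x).eq_empty_or_nonempty with h0 | h0
    · have hPx : P.card = 1 := by rw [← hcard, h0]; simp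
      obtain ⟨y, hy⟩ := Finset.card_eq_one.1 hPx
      have : (P ×ˢ P).filter (fun z => inner ℝ z.1 z.2 = (1/2 : ℝ)) = ∅ := by
        apply Finset.filter_eq_empty_iff.2
        rintro ⟨a, b⟩ hab
        have hs := hself y (by simp [hy])
        rw [hy] at hab
        simp only [Finset.mem_product, Finset.mem_singleton] at hab
        rw [hab.1, hab.2]; exact hs
      rw [this, hPx]; simp
    · have := ih _ (Finset.erase_ssubset hx) h0
        (fun y hy => hn y (Finset.mem_of_mem_erase hy))
        (fun y hy z hz => hh y (Finset.mem_of_mem_erase hy) z (Finset.mem_of_mem_erase hz))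
      have h1 := Finset.card_le_card hsub
      have h2 := Finset.card_union_le
        ((P.erase x ×ˢ P.erase x).filter (fun z => inner ℝ z.1 z.2 = (1/2 : ℝ)))
        (({x} ×ˢ N) ∪ (N ×ˢ {x}))
      have h3 := Finset.card_union_le (({x} : Finset E4) ×ˢ N) (N ×ˢ {x})
      rw [Finset.card_product, Finset.card_product, Finset.card_singleton] at h3
      omega
  · push Not at hdeg
    obtain ⟨o, ho⟩ := hP
    let G : Cfg E4 {x // x ∈ P} :=
      { p := fun x => x.1
        hn := fun i => hn i.1 i.2
        hh := fun i j => hh i.1 i.2 j.1 j.2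
        inj := fun i j h => Subtype.ext h
        o := ⟨o, ho⟩
        deg3 := by
          intro i
          have h3 := hdeg i.1 i.2
          set N := P.filter (fun y => inner ℝ i.1 y = (1/2 : ℝ)) with hN
          have hm : ∀ k : Fin 3, (N.equivFin.symm (Fin.castLE h3 k)).1 ∈ N :=
            fun k => (N.equivFin.symm (Fin.castLE h3 k)).2
          refine ⟨fun k => ⟨(N.equivFin.symm (Fin.castLE h3 k)).1,
            (Finset.mem_filter.1 (hm k)).1⟩, ?_, fun k => (Finset.mem_filter.1 (hm k)).2⟩
          intro k l hkl
          have h4 := congrArg Subtype.val hkl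
          have h5 := N.equivFin.symm.injective (Subtype.ext h4)
          exact Fin.castLE_injective h3 h5 }
    have hc := Cfg.count (G := G) (by simp)
    rw [Fintype.card_coe] at hc
    refine le_trans (Nat.add_le_add_right ?_ 4) hc
    rw [← Fintype.card_coe]
    refine Fintype.card_le_of_injective (fun z => ⟨(⟨z.1.1, ?_⟩, ⟨z.1.2, ?_⟩), ?_⟩) ?_
    · exact (Finset.mem_product.1 (Finset.mem_filter.1 z.2).1).1
    · exact (Finset.mem_product.1 (Finset.mem_filter.1 z.2).1).2
    · exact (Finset.mem_filter.1 z.2).2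
    · intro z w h
      have h1 := congrArg (fun q : G.Zt => (q.1.1.1, q.1.2.1)) h
      exact Subtype.ext h1

theorem nbr_count (X : Finset E4) (hdiam : ∀ x ∈ X, ∀ y ∈ X, ‖x - y‖ ≤ 1)
    (v : E4) (hv : ∃ y ∈ X, ‖v - y‖ = 1) :
    ((X ×ˢ X).filter (fun z => ‖v - z.1‖ = 1 ∧ ‖v - z.2‖ = 1 ∧ ‖z.1 - z.2‖ = 1)).card + 4 ≤
      4 * (X.filter (fun y => ‖v - y‖ = 1)).card := by
  set N := X.filter (fun y => ‖v - y‖ = 1) with hN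
  have hinj : Function.Injective (fun y : E4 => y - v) := fun a b h => by simpa using h
  have hkey : ∀ x y : E4, ‖v - x‖ = 1 → ‖v - y‖ = 1 →
      ‖x - y‖ ^ 2 = 2 - 2 * inner ℝ (x - v) (y - v) := by
    intro x y hx hy
    have : x - y = (x - v) - (y - v) := by abel
    rw [this, norm_sub_sq_real, norm_sub_rev x v, norm_sub_rev y v, hx, hy]; ring
  have h := local_count (N.image (fun y => y - v)) ?_ ?_ ?_
  · rw [Finset.card_image_of_injective _ hinj] at h
    refine le_trans (Nat.add_le_add_right ?_ 4) h
    apply Finset.card_le_card_of_injOn (fun z => (z.1 - v, z.2 - v))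
    · rintro ⟨a, b⟩ hab
      simp only [Finset.coe_filter, Finset.mem_product, Set.mem_ofPred_eq] at hab
      obtain ⟨⟨ha, hb⟩, h1, h2, h3⟩ := hab
      simp only [Finset.coe_filter, Finset.mem_product, Set.mem_ofPred_eq]
      refine ⟨⟨Finset.mem_image_of_mem _ (Finset.mem_filter.2 ⟨ha, h1⟩),
        Finset.mem_image_of_mem _ (Finset.mem_filter.2 ⟨hb, h2⟩)⟩, ?_⟩
      have := hkey a b h1 h2
      rw [h3] at this; linarith
    · rintro ⟨a, b⟩ _ ⟨c, d⟩ _ h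
      simpa using h
  · obtain ⟨y, hy, h1⟩ := hv
    exact ⟨y - v, Finset.mem_image_of_mem _ (Finset.mem_filter.2 ⟨hy, h1⟩)⟩
  · intro x hx
    obtain ⟨y, hy, rfl⟩ := Finset.mem_image.1 hx
    rw [norm_sub_rev]; exact (Finset.mem_filter.1 hy).2
  · intro x hx y hy
    obtain ⟨a, ha, rfl⟩ := Finset.mem_image.1 hx
    obtain ⟨b, hb, rfl⟩ := Finset.mem_image.1 hy
    obtain ⟨ha1, ha2⟩ := Finset.mem_filter.1 ha
    obtain ⟨hb1, hb2⟩ := Finset.mem_filter.1 hb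
    have h1 := hkey a b ha2 hb2
    have h2 := hdiam a ha1 b hb1
    have h3 : ‖a - b‖ ^ 2 ≤ 1 := by
      have := norm_nonneg (a - b); nlinarith
    linarith

theorem deg_sum (X : Finset E4) :
    ∑ v ∈ X, (X.filter (fun y => ‖v - y‖ = 1)).card ≤ 2 * (unitPairs X).card := by
  rw [← Finset.card_sigma]
  apply Finset.card_le_mul_card_image_of_maps_to (f := fun z => ({z.1, z.2} : Finset E4))
  · rintro ⟨a, b⟩ h
    simp only [Finset.mem_sigma, Finset.mem_filter] at h
    obtain ⟨ha, hb, hab⟩ := h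
    have hne : a ≠ b := by rintro rfl; simp at hab
    have hba : ‖b - a‖ = 1 := by rw [norm_sub_rev]; exact hab
    simp only [unitPairs, Finset.mem_filter, Finset.mem_powersetCard]
    refine ⟨⟨?_, Finset.card_pair hne⟩, ?_⟩
    · intro x hx; simp at hx; rcases hx with rfl | rfl <;> assumption
    · intro x hx y hy hxy
      simp at hx hy
      rcases hx with rfl | rfl <;> rcases hy with rfl | rfl <;> first | assumption | exact absurd rfl hxy
  · intro s hs
    simp only [unitPairs, Finset.mem_filter, Finset.mem_powersetCard] at hs
    obtain ⟨a, b, hab, rfl⟩ := Finset.card_eq_two.1 hs.1.2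
    refine le_trans (Finset.card_le_card (t := {⟨a, b⟩, ⟨b, a⟩}) ?_) Finset.card_le_two
    rintro ⟨x, y⟩ h
    have h2 := (Finset.mem_filter.1 h).2
    have h3 := (Finset.mem_filter.1 (Finset.mem_sigma.1 (Finset.mem_filter.1 h).1).2).2
    simp only at h2 h3
    have hne : x ≠ y := by rintro rfl; simp at h3
    have hx : x ∈ ({a, b} : Finset E4) := by rw [← h2]; simp
    have hy : y ∈ ({a, b} : Finset E4) := by rw [← h2]; simp
    simp at hx hy
    rcases hx with rfl | rfl <;> rcases hy with rfl | rfl <;> first | exact absurd rfl hne | simp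

theorem perm3 (a b c x y z : E4) (hx : x ∈ ({a, b, c} : Finset E4))
    (hy : y ∈ ({a, b, c} : Finset E4)) (hz : z ∈ ({a, b, c} : Finset E4))
    (ha : a ∈ ({x, y, z} : Finset E4)) (hb : b ∈ ({x, y, z} : Finset E4))
    (hc : c ∈ ({x, y, z} : Finset E4)) : ({x, y, z} : Finset E4) = {a, b, c} := by
  apply Finset.Subset.antisymm
  · intro w hw
    rw [Finset.mem_insert, Finset.mem_insert, Finset.mem_singleton] at hw
    rcases hw with rfl | rfl | rfl <;> assumption
  · intro w hw
    rw [Finset.mem_insert, Finset.mem_insert, Finset.mem_singleton] at hw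
    rcases hw with rfl | rfl | rfl <;> assumption

theorem tri_sum (X : Finset E4) : 6 * (unitTriangles X).card ≤
    ∑ v ∈ X, ((X ×ˢ X).filter
      (fun z => ‖v - z.1‖ = 1 ∧ ‖v - z.2‖ = 1 ∧ ‖z.1 - z.2‖ = 1)).card := by
  rw [← Finset.card_sigma]
  apply Finset.mul_card_image_le_card_of_maps_to
    (f := fun z => ({z.1, z.2.1, z.2.2} : Finset E4))
  · rintro ⟨a, b, c⟩ h
    simp only [Finset.mem_sigma, Finset.mem_filter, Finset.mem_product] at h
    obtain ⟨ha, ⟨hb, hc⟩, hab, hac, hbc⟩ := h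
    have n1 : a ≠ b := by rintro rfl; simp at hab
    have n2 : a ≠ c := by rintro rfl; simp at hac
    have n3 : b ≠ c := by rintro rfl; simp at hbc
    have hba : ‖b - a‖ = 1 := by rw [norm_sub_rev]; exact hab
    have hca : ‖c - a‖ = 1 := by rw [norm_sub_rev]; exact hac
    have hcb : ‖c - b‖ = 1 := by rw [norm_sub_rev]; exact hbc
    simp only [unitTriangles, Finset.mem_filter, Finset.mem_powersetCard]
    refine ⟨⟨?_, Finset.card_eq_three.2 ⟨a, b, c, n1, n2, n3, rfl⟩⟩, ?_⟩
    · intro x hx; simp at hx; rcases hx with rfl | rfl | rfl <;> assumption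
    · intro x hx y hy hxy
      simp at hx hy
      rcases hx with rfl | rfl | rfl <;> rcases hy with rfl | rfl | rfl <;>
        first | assumption | exact absurd rfl hxy
  · intro s hs
    simp only [unitTriangles, Finset.mem_filter, Finset.mem_powersetCard] at hs
    obtain ⟨⟨hsX, hs3⟩, hu⟩ := hs
    obtain ⟨a, b, c, n1, n2, n3, rfl⟩ := Finset.card_eq_three.1 hs3
    have ha : a ∈ X := hsX (by simp)
    have hb : b ∈ X := hsX (by simp)
    have hc : c ∈ X := hsX (by simp)
    have hab := hu a (by simp) b (by simp) n1
    have hac := hu a (by simp) c (by simp) n2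
    have hbc := hu b (by simp) c (by simp) n3
    have hba := hu b (by simp) a (by simp) n1.symm
    have hca := hu c (by simp) a (by simp) n2.symm
    have hcb := hu c (by simp) b (by simp) n3.symm
    have h6 : ({⟨a, b, c⟩, ⟨a, c, b⟩, ⟨b, a, c⟩, ⟨b, c, a⟩, ⟨c, a, b⟩, ⟨c, b, a⟩} :
        Finset ((_ : E4) × (E4 × E4))).card = 6 := by
      repeat rw [Finset.card_insert_of_notMem (by
        simp [n1, n2, n3, n1.symm, n2.symm, n3.symm])]
      simp
    rw [← h6]
    apply Finset.card_le_card
    intro z hz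
    simp only [Finset.mem_insert, Finset.mem_singleton] at hz
    simp only [Finset.mem_filter, Finset.mem_sigma, Finset.mem_product]
    rcases hz with rfl | rfl | rfl | rfl | rfl | rfl <;>
      refine ⟨⟨?_, ⟨?_, ?_⟩, ?_, ?_, ?_⟩, ?_⟩ <;> first | assumption | rfl | exact perm3 _ _ _ _ _ _ (by simp) (by simp) (by simp) (by simp) (by simp) (by simp)

end VZ

theorem triangles_bounded_by_edges (X : Finset (EuclideanSpace ℝ (Fin 4)))
    (n e t : ℕ) (hn : X.card = n)
    (hdiam : ∀ x ∈ X, ∀ y ∈ X, ‖x - y‖ ≤ 1)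
    (hmindeg : ∀ x ∈ X, ∃ y ∈ X, ‖x - y‖ = 1)
    (he : (unitPairs X).card = e) (ht : (unitTriangles X).card = t) :
    (3 * t : ℤ) ≤ 4 * e - 2 * n := by
  have h1 := VZ.deg_sum X
  have h2 := VZ.tri_sum X
  have h3 := Finset.sum_le_sum (fun v hv => VZ.nbr_count X hdiam v (hmindeg v hv))
  rw [Finset.sum_add_distrib, Finset.sum_const, ← Finset.mul_sum, smul_eq_mul, hn] at h3
  rw [he] at h1
  rw [ht] at h2
  omega
end

section
/- Let X be a finite set in Euclidean 4-space with all pairwise distances at most 1. Then there do not exist three 4-element subsets K₁, K₂, K₃ of X, each having all six pairwise distances within it equal to 1, such that |K₁ ∩ K₂| = 2, |K₁ ∩ K₃| = 2, and K₂ ∩ K₃ = ∅. -/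
attribute [local instance] Classical.propDecidable

lemma core0 (a1 w1 a2 w2 a3 w3 a4 w4 : ℝ)
    (A1 : a1 ≤ 0 → a1^2 < w1^2) (A2 : a2 ≤ 0 → a2^2 < w2^2)
    (A3 : a3 ≤ 0 → a3^2 < w3^2) (A4 : a4 ≤ 0 → a4^2 < w4^2)
    (B1 : w1 * w2 ≤ a1 * a2) (B2 : w3 * w4 ≤ a3 * a4)
    (h13 : a1 * a3 ≤ w1 * w3) (h14 : a1 * a4 ≤ w1 * w4)
    (h23 : a2 * a3 ≤ w2 * w3) (h24 : a2 * a4 ≤ w2 * w4)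
    (n1 : a1 ≤ 0) (n3 : a3 ≤ 0) (p1 : 0 < w1) : False := by
  have l1 : -a1 < w1 := by have := A1 n1; nlinarith
  have p3 : 0 < w3 := by
    have h0 : 0 ≤ w3 := by
      by_contra h
      push Not at h
      nlinarith [mul_nonneg_of_nonpos_of_nonpos n1 n3, mul_pos p1 (neg_pos.2 h)]
    rcases h0.eq_or_lt with h | h
    · have := A3 n3
      rw [← h] at this
      nlinarith [sq_nonneg a3]
    · exact h
  have l3 : -a3 < w3 := by have := A3 n3; nlinarith
  have key : ∀ a w b v : ℝ, (b ≤ 0 → b^2 < v^2) → a ≤ 0 → -a < w → w * v ≤ a * b → ∀ c x : ℝ,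
      c ≤ 0 → 0 < x → b * c ≤ v * x → 0 < b ∧ v ≤ 0 := by
    intro a w b v hA ha hw hB c x hc hx hC
    have hw0 : 0 < w := by linarith
    have hb : 0 < b := by
      by_contra hb
      push Not at hb
      have hv : 0 ≤ v := by
        by_contra h
        push Not at h
        nlinarith [mul_nonneg_of_nonpos_of_nonpos hb hc, mul_pos hx (neg_pos.2 h)]
      have hbv : -b < v := by have := hA hb; nlinarith
      nlinarith [mul_nonneg hw0.le (sub_pos.2 hbv).le, mul_pos hw0 (sub_pos.2 hbv), mul_nonneg (neg_nonneg.2 hb) (sub_pos.2 hw).le]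
    refine ⟨hb, ?_⟩
    by_contra h
    push Not at h
    nlinarith [mul_pos hw0 h, mul_nonneg (neg_nonneg.2 ha) hb.le]
  obtain ⟨q2, v2⟩ := key a1 w1 a2 w2 A2 n1 l1 B1 a3 w3 n3 p3 h23
  obtain ⟨q4, v4⟩ := key a3 w3 a4 w4 A4 n3 l3 B2 a1 w1 n1 p1 (by linarith)
  have c4 : -w4 < a4 := by
    by_contra h
    push Not at h
    nlinarith [mul_nonneg p1.le (sub_nonneg.2 h), mul_pos q4 (sub_pos.2 l1)]
  have c2 : -w2 < a2 := by
    by_contra h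
    push Not at h
    nlinarith [mul_nonneg p3.le (sub_nonneg.2 h), mul_pos q2 (sub_pos.2 l3)]
  nlinarith [mul_nonneg (neg_nonneg.2 v2) (sub_pos.2 c4).le, mul_pos q4 (sub_pos.2 c2)]

lemma core1 (a1 w1 a2 w2 a3 w3 a4 w4 : ℝ)
    (A1 : a1 ≤ 0 → a1^2 < w1^2) (A2 : a2 ≤ 0 → a2^2 < w2^2)
    (A3 : a3 ≤ 0 → a3^2 < w3^2) (A4 : a4 ≤ 0 → a4^2 < w4^2)
    (B1 : w1 * w2 ≤ a1 * a2) (B2 : w3 * w4 ≤ a3 * a4)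
    (h13 : a1 * a3 ≤ w1 * w3) (h14 : a1 * a4 ≤ w1 * w4)
    (h23 : a2 * a3 ≤ w2 * w3) (h24 : a2 * a4 ≤ w2 * w4)
    (n1 : a1 ≤ 0) (n3 : a3 ≤ 0) : False := by
  rcases lt_trichotomy w1 0 with h | h | h
  · exact core0 a1 (-w1) a2 (-w2) a3 (-w3) a4 (-w4) (by simpa using A1) (by simpa using A2)
      (by simpa using A3) (by simpa using A4) (by linarith) (by linarith) (by linarith)
      (by linarith) (by linarith) (by linarith) n1 n3 (by linarith)
  · have := A1 n1
    rw [h] at this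
    nlinarith [sq_nonneg a1]
  · exact core0 a1 w1 a2 w2 a3 w3 a4 w4 A1 A2 A3 A4 B1 B2 h13 h14 h23 h24 n1 n3 h

lemma core (a1 w1 a2 w2 a3 w3 a4 w4 : ℝ)
    (A1 : a1 ≤ 0 → a1^2 < w1^2) (A2 : a2 ≤ 0 → a2^2 < w2^2)
    (A3 : a3 ≤ 0 → a3^2 < w3^2) (A4 : a4 ≤ 0 → a4^2 < w4^2)
    (B1 : w1 * w2 ≤ a1 * a2) (B2 : w3 * w4 ≤ a3 * a4)
    (h13 : a1 * a3 ≤ w1 * w3) (h14 : a1 * a4 ≤ w1 * w4)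
    (h23 : a2 * a3 ≤ w2 * w3) (h24 : a2 * a4 ≤ w2 * w4)
    (n1 : a1 ≤ 0 ∨ a2 ≤ 0) (n3 : a3 ≤ 0 ∨ a4 ≤ 0) : False := by
  rcases n1 with n1 | n1 <;> rcases n3 with n3 | n3
  · exact core1 a1 w1 a2 w2 a3 w3 a4 w4 A1 A2 A3 A4 B1 B2 h13 h14 h23 h24 n1 n3
  · exact core1 a1 w1 a2 w2 a4 w4 a3 w3 A1 A2 A4 A3 B1 (by linarith) h14 h13 h24 h23 n1 n3
  · exact core1 a2 w2 a1 w1 a3 w3 a4 w4 A2 A1 A3 A4 (by linarith) B2 h23 h24 h13 h14 n1 n3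
  · exact core1 a2 w2 a1 w1 a4 w4 a3 w3 A2 A1 A4 A3 (by linarith) (by linarith) h24 h23 h14 h13 n1 n3

lemma factA (k u t w : ℝ) (hk : k^2 = 2) (k0 : 0 < k)
    (hs : u^2 + (t + k/4)^2 + w^2 = 3/4) (h1 : u ≤ k * t) (h2 : -u ≤ k * t)
    (d1 : 0 < (u - 1/2)^2 + (t - k/4)^2 + w^2)
    (d2 : 0 < (u + 1/2)^2 + (t - k/4)^2 + w^2) :
    t - k/4 ≤ 0 → (t - k/4)^2 < w^2 := by
  intro ht
  have t0 : 0 ≤ t := by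
    have : 0 ≤ k * t := by linarith
    exact nonneg_of_mul_nonneg_right this k0
  have hu : u^2 ≤ 2 * t^2 := by
    have := sq_le_sq' (by linarith : -(k*t) ≤ u) h1
    rwa [mul_pow, hk] at this
  have e : w^2 - (t - k/4)^2 = 1/2 - u^2 - 2*t^2 := by linear_combination hs - (1/8) * hk
  by_contra hcon
  push Not at hcon
  have tt : t = k/4 := by
    have : (k/4)^2 ≤ t^2 := by linarith
    have := abs_le_of_sq_le_sq' this t0 |>.2
    linarith
  subst tt
  have w0 : w^2 = 0 := by nlinarith [sq_nonneg w]
  have hu : (u - 1/2) * (u + 1/2) = 0 := by linear_combination hs - w0 - (1/4) * hk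
  rcases mul_eq_zero.1 hu with h | h
  · rw [h, w0] at d1; simp at d1
  · rw [h, w0] at d2; simp at d2

lemma factB (k u t w u' t' w' : ℝ) (hk : k^2 = 2)
    (hs : u^2 + (t + k/4)^2 + w^2 = 3/4) (h1 : u ≤ k * t) (h2 : -u ≤ k * t)
    (hs' : u'^2 + (t' + k/4)^2 + w'^2 = 3/4) (h1' : u' ≤ k * t') (h2' : -u' ≤ k * t')
    (hd : (u - u')^2 + (t - t')^2 + (w - w')^2 = 1) :
    w * w' ≤ (t - k/4) * (t' - k/4) := by
  have e : w * w' - (t - k/4) * (t' - k/4) = -(u * u' + (k * t) * (k * t')) := by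
    linear_combination (hs + hs' - hd) / 2 + (t * t' - 1/8) * hk
  have : 0 ≤ u * u' + (k * t) * (k * t') := by
    nlinarith [mul_nonneg (sub_nonneg.2 h1) (sub_nonneg.2 h1'),
      mul_nonneg (sub_nonneg.2 h2) (sub_nonneg.2 h2')]
  linarith

lemma factC (k u t w u' t' w' : ℝ) (hk : k^2 = 2) (k0 : 0 < k)
    (hs : u^2 + (t + k/4)^2 + w^2 = 3/4)
    (hs' : u'^2 + (t' + k/4)^2 + w'^2 = 3/4)
    (hd : (u - u')^2 + (t - t')^2 + (w - w')^2 = 1) :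
    t - k/4 ≤ 0 ∨ t' - k/4 ≤ 0 := by
  by_contra hcon
  push Not at hcon
  obtain ⟨a, b⟩ := hcon
  obtain ⟨T, rfl⟩ : ∃ T, t = T - k/4 := ⟨t + k/4, by ring⟩
  obtain ⟨T', rfl⟩ : ∃ T', t' = T' - k/4 := ⟨t' + k/4, by ring⟩
  have i : u * u' + w * w' = 1/4 - T * T' := by linear_combination (hs + hs' - hd)/2
  have v1 : u^2 + w^2 = 3/4 - T^2 := by linear_combination hs
  have v2 : u'^2 + w'^2 = 3/4 - T'^2 := by linear_combination hs'
  have cs : (u * u' + w * w')^2 ≤ (u^2 + w^2) * (u'^2 + w'^2) := by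
    nlinarith [sq_nonneg (u * w' - w * u')]
  rw [i, v1, v2] at cs
  have : 1/2 < T * T' := by nlinarith [mul_pos (sub_pos.2 a) (sub_pos.2 b)]
  nlinarith [sq_nonneg (T - T')]

lemma coords (a b c d : EuclideanSpace ℝ (Fin 4)) (hab : ‖a - b‖ = 1) (hac : ‖a - c‖ = 1)
    (had : ‖a - d‖ = 1) (hbc : ‖b - c‖ = 1) (hbd : ‖b - d‖ = 1) (hcd : ‖c - d‖ = 1) :
    ∃ (k : ℝ) (F : EuclideanSpace ℝ (Fin 4) → Fin 4 → ℝ), k^2 = 2 ∧ 0 < k ∧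
      (∀ x y, ‖x - y‖^2 = (F x 0 - F y 0)^2 + (F x 1 - F y 1)^2 + (F x 2 - F y 2)^2
        + (F x 3 - F y 3)^2) ∧
      (F a 0 = 1/2 ∧ F a 1 = 0 ∧ F a 2 = k/4 ∧ F a 3 = 0) ∧
      (F b 0 = -1/2 ∧ F b 1 = 0 ∧ F b 2 = k/4 ∧ F b 3 = 0) ∧
      (F c 0 = 0 ∧ F c 1 = 1/2 ∧ F c 2 = -k/4 ∧ F c 3 = 0) ∧
      (F d 0 = 0 ∧ F d 1 = -1/2 ∧ F d 2 = -k/4 ∧ F d 3 = 0) := by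
  obtain ⟨k, hk, k0⟩ : ∃ k : ℝ, k^2 = 2 ∧ 0 < k := ⟨√2, by norm_num, by positivity⟩
  -- work with x = a - d, y = b - d, z = c - d
  obtain ⟨x, rfl⟩ : ∃ x, a = x + d := ⟨a - d, by simp⟩
  obtain ⟨y, rfl⟩ : ∃ x, b = x + d := ⟨b - d, by simp⟩
  obtain ⟨z, rfl⟩ : ∃ x, c = x + d := ⟨c - d, by simp⟩
  simp only [add_sub_add_right_eq_sub, add_sub_cancel_right] at *
  have xx : inner ℝ x x = 1 := by rw [real_inner_self_eq_norm_sq, had]; norm_num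
  have yy : inner ℝ y y = 1 := by rw [real_inner_self_eq_norm_sq, hbd]; norm_num
  have zz : inner ℝ z z = 1 := by rw [real_inner_self_eq_norm_sq, hcd]; norm_num
  have xy : inner ℝ x y = 1/2 := by
    have := norm_sub_sq_real x y
    rw [hab, had, hbd] at this; linarith
  have xz : inner ℝ x z = 1/2 := by
    have := norm_sub_sq_real x z
    rw [hac, had, hcd] at this; linarith
  have yz : inner ℝ y z = 1/2 := by
    have := norm_sub_sq_real y z
    rw [hbc, hbd, hcd] at this; linarith
  have yx : inner ℝ y x = 1/2 := by rw [real_inner_comm, xy]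
  have zx : inner ℝ z x = 1/2 := by rw [real_inner_comm, xz]
  have zy : inner ℝ z y = 1/2 := by rw [real_inner_comm, yz]
  let v : Fin 4 → EuclideanSpace ℝ (Fin 4) := ![x - y, z, (k/2) • (x + y - z), 0]
  have hv : Orthonormal ℝ (({0,1,2} : Set (Fin 4)).domRestrict v) := by
    rw [orthonormal_iff_ite]
    rintro ⟨i, hi⟩ ⟨j, hj⟩
    simp only [Set.mem_insert_iff, Set.mem_singleton_iff] at hi hj
    rcases hi with rfl | rfl | rfl <;> rcases hj with rfl | rfl | rfl <;>
      simp [v, Set.domRestrict, inner_sub_left, inner_sub_right, inner_add_left, inner_add_right, real_inner_smul_left,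
        real_inner_smul_right, xx, yy, zz, xy, xz, yz, yx, zx, zy, -inner_self_eq_norm_sq_to_K] <;> first | done | (norm_num; done) | nlinarith
  obtain ⟨B, hB⟩ := hv.exists_orthonormalBasis_extension_of_card_eq (by simp)
  have B0 : B 0 = x - y := hB 0 (by simp)
  have B1 : B 1 = z := hB 1 (by simp)
  have B2 : B 2 = (k/2) • (x + y - z) := hB 2 (by simp)
  have o03 : inner ℝ (B 3) (B 0) = 0 := B.orthonormal.2 (by decide)
  have o13 : inner ℝ (B 3) (B 1) = 0 := B.orthonormal.2 (by decide)
  have o23 : inner ℝ (B 3) (B 2) = 0 := B.orthonormal.2 (by decide)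
  rw [B0, inner_sub_right] at o03
  rw [B1] at o13
  rw [B2, real_inner_smul_right, inner_sub_right, inner_add_right] at o23
  have o23' := (mul_eq_zero.1 o23).resolve_left (by positivity)
  have ox : inner ℝ (B 3) x = 0 := by linarith
  have oy : inner ℝ (B 3) y = 0 := by linarith
  refine ⟨k, fun p i => inner ℝ (B i) (p - d - (1/4 : ℝ) • (x + y + z)), hk, k0, ?_, ?_, ?_, ?_, ?_⟩
  · intro p q
    rw [← B.sum_sq_norm_inner_right (p - q), Fin.sum_univ_four]
    simp only [← inner_sub_right, Real.norm_eq_abs, sq_abs, sub_sub_sub_cancel_right]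
  all_goals
    simp [B0, B1, B2, ox, oy, o13, inner_sub_left, inner_sub_right, inner_add_left, inner_add_right, real_inner_smul_left,
        real_inner_smul_right, xx, yy, zz, xy, xz, yz, yx, zx, zy, -inner_self_eq_norm_sq_to_K]
    try norm_num
    try ring_nf
    try trivial

set_option maxHeartbeats 1000000 in
lemma geom (a b c d p q r s : EuclideanSpace ℝ (Fin 4)) (hab : ‖a - b‖ = 1) (hac : ‖a - c‖ = 1)
    (had : ‖a - d‖ = 1) (hbc : ‖b - c‖ = 1) (hbd : ‖b - d‖ = 1) (hcd : ‖c - d‖ = 1)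
    (hpa : ‖p - a‖ = 1) (hpb : ‖p - b‖ = 1) (hqa : ‖q - a‖ = 1) (hqb : ‖q - b‖ = 1)
    (hpq : ‖p - q‖ = 1)
    (hrc : ‖r - c‖ = 1) (hrd : ‖r - d‖ = 1) (hsc : ‖s - c‖ = 1) (hsd : ‖s - d‖ = 1)
    (hrs : ‖r - s‖ = 1)
    (hpc : ‖p - c‖ ≤ 1) (hpd : ‖p - d‖ ≤ 1) (hqc : ‖q - c‖ ≤ 1) (hqd : ‖q - d‖ ≤ 1)
    (hra : ‖r - a‖ ≤ 1) (hrb : ‖r - b‖ ≤ 1) (hsa : ‖s - a‖ ≤ 1) (hsb : ‖s - b‖ ≤ 1)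
    (hpr : ‖p - r‖ ≤ 1) (hps : ‖p - s‖ ≤ 1) (hqr : ‖q - r‖ ≤ 1) (hqs : ‖q - s‖ ≤ 1)
    (npc : p ≠ c) (npd : p ≠ d) (nqc : q ≠ c) (nqd : q ≠ d)
    (nra : r ≠ a) (nrb : r ≠ b) (nsa : s ≠ a) (nsb : s ≠ b) : False := by
  obtain ⟨k, F, hk, k0, hF, ⟨a0, a1, a2, a3⟩, ⟨b0, b1, b2, b3⟩, ⟨c0, c1, c2, c3⟩,
    ⟨d0, d1, d2, d3⟩⟩ := coords a b c d hab hac had hbc hbd hcd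
  have E : ∀ x y, ‖x - y‖ = 1 → (F x 0 - F y 0)^2 + (F x 1 - F y 1)^2 + (F x 2 - F y 2)^2
        + (F x 3 - F y 3)^2 = 1 := by
    intro x y h; rw [← hF, h]; norm_num
  have L : ∀ x y, ‖x - y‖ ≤ 1 → (F x 0 - F y 0)^2 + (F x 1 - F y 1)^2 + (F x 2 - F y 2)^2
        + (F x 3 - F y 3)^2 ≤ 1 := by
    intro x y h; rw [← hF]; exact pow_le_one₀ (norm_nonneg _) h
  have N : ∀ x y, x ≠ y → 0 < (F x 0 - F y 0)^2 + (F x 1 - F y 1)^2 + (F x 2 - F y 2)^2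
        + (F x 3 - F y 3)^2 := by
    intro x y h; rw [← hF]; exact pow_pos (norm_pos_iff.2 (sub_ne_zero.2 h)) 2
  have T1 : ∀ x, ‖x - a‖ = 1 → ‖x - b‖ = 1 → ‖x - c‖ ≤ 1 → ‖x - d‖ ≤ 1 → x ≠ c → x ≠ d →
      F x 0 = 0 ∧ (F x 1)^2 + (-F x 2 + k/4)^2 + (F x 3)^2 = 3/4 ∧ F x 1 ≤ k * (-F x 2) ∧
      -F x 1 ≤ k * (-F x 2) ∧ 0 < (F x 1 - 1/2)^2 + (-F x 2 - k/4)^2 + (F x 3)^2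
      ∧ 0 < (F x 1 + 1/2)^2 + (-F x 2 - k/4)^2 + (F x 3)^2 := by
    intro x ha hb hc hd nc nd
    have ha := E _ _ ha
    have hb := E _ _ hb
    have hc := L _ _ hc
    have hd := L _ _ hd
    have nc := N _ _ nc
    have nd := N _ _ nd
    simp only [a0, a1, a2, a3, b0, b1, b2, b3, c0, c1, c2, c3, d0, d1, d2, d3] at ha hb hc hd nc nd
    have h0 : F x 0 = 0 := by linarith
    rw [h0] at ha hb hc hd nc nd
    refine ⟨h0, ?_, ?_, ?_, ?_, ?_⟩ <;> linarith
  have T2 : ∀ x, ‖x - c‖ = 1 → ‖x - d‖ = 1 → ‖x - a‖ ≤ 1 → ‖x - b‖ ≤ 1 → x ≠ a → x ≠ b →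
      F x 1 = 0 ∧ (F x 0)^2 + (F x 2 + k/4)^2 + (F x 3)^2 = 3/4 ∧ F x 0 ≤ k * (F x 2) ∧
      -F x 0 ≤ k * (F x 2) ∧ 0 < (F x 0 - 1/2)^2 + (F x 2 - k/4)^2 + (F x 3)^2
      ∧ 0 < (F x 0 + 1/2)^2 + (F x 2 - k/4)^2 + (F x 3)^2 := by
    intro x ha hb hc hd nc nd
    have ha := E _ _ ha
    have hb := E _ _ hb
    have hc := L _ _ hc
    have hd := L _ _ hd
    have nc := N _ _ nc
    have nd := N _ _ nd
    simp only [a0, a1, a2, a3, b0, b1, b2, b3, c0, c1, c2, c3, d0, d1, d2, d3] at ha hb hc hd nc nd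
    have h0 : F x 1 = 0 := by linarith
    rw [h0] at ha hb hc hd nc nd
    refine ⟨h0, ?_, ?_, ?_, ?_, ?_⟩ <;> linarith
  obtain ⟨p0, ps, p1, p2, p3, p4⟩ := T1 p hpa hpb hpc hpd npc npd
  obtain ⟨q0, qs, q1, q2, q3, q4⟩ := T1 q hqa hqb hqc hqd nqc nqd
  obtain ⟨r0, rs, r1, r2, r3, r4⟩ := T2 r hrc hrd hra hrb nra nrb
  obtain ⟨s0, ss, s1, s2, s3, s4⟩ := T2 s hsc hsd hsa hsb nsa nsb
  have epq : (F p 1 - F q 1)^2 + (-F p 2 - -F q 2)^2 + (F p 3 - F q 3)^2 = 1 := by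
    have := E _ _ hpq
    rw [p0, q0] at this
    linear_combination this
  have ers : (F r 0 - F s 0)^2 + (F r 2 - F s 2)^2 + (F r 3 - F s 3)^2 = 1 := by
    have := E _ _ hrs
    rw [r0, s0] at this
    linear_combination this
  have X : ∀ x y, ‖x - y‖ ≤ 1 → F x 0 = 0 → F y 1 = 0 →
      (F x 1)^2 + (-F x 2 + k/4)^2 + (F x 3)^2 = 3/4 →
      (F y 0)^2 + (F y 2 + k/4)^2 + (F y 3)^2 = 3/4 →
      (-F x 2 - k/4) * (F y 2 - k/4) ≤ F x 3 * F y 3 := by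
    intro x y h hx hy sx sy
    have := L _ _ h
    rw [hx, hy] at this
    linarith
  exact core (-F p 2 - k/4) (F p 3) (-F q 2 - k/4) (F q 3) (F r 2 - k/4) (F r 3)
    (F s 2 - k/4) (F s 3)
    (factA k _ _ _ hk k0 ps p1 p2 p3 p4) (factA k _ _ _ hk k0 qs q1 q2 q3 q4)
    (factA k _ _ _ hk k0 rs r1 r2 r3 r4) (factA k _ _ _ hk k0 ss s1 s2 s3 s4)
    (factB k _ _ _ _ _ _ hk ps p1 p2 qs q1 q2 epq) (factB k _ _ _ _ _ _ hk rs r1 r2 ss s1 s2 ers)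
    (X p r hpr p0 r0 ps rs) (X p s hps p0 s0 ps ss) (X q r hqr q0 r0 qs rs) (X q s hqs q0 s0 qs ss)
    (factC k _ _ _ _ _ _ hk k0 ps qs epq) (factC k _ _ _ _ _ _ hk k0 rs ss ers)

theorem no_three_cliques_bad_intersection_pattern
    (X : Finset (EuclideanSpace ℝ (Fin 4)))
    (hdiam : ∀ x ∈ X, ∀ y ∈ X, ‖x - y‖ ≤ 1) :
    ¬ ∃ K₁ K₂ K₃ : Finset (EuclideanSpace ℝ (Fin 4)),
      K₁ ⊆ X ∧ K₂ ⊆ X ∧ K₃ ⊆ X ∧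
      K₁.card = 4 ∧ K₂.card = 4 ∧ K₃.card = 4 ∧
      (∀ x ∈ K₁, ∀ y ∈ K₁, x ≠ y → ‖x - y‖ = 1) ∧
      (∀ x ∈ K₂, ∀ y ∈ K₂, x ≠ y → ‖x - y‖ = 1) ∧
      (∀ x ∈ K₃, ∀ y ∈ K₃, x ≠ y → ‖x - y‖ = 1) ∧
      (K₁ ∩ K₂).card = 2 ∧ (K₁ ∩ K₃).card = 2 ∧ K₂ ∩ K₃ = ∅ := by
  rintro ⟨K₁, K₂, K₃, s1, s2, s3, n1, n2, n3, e1, e2, e3, c12, c13, c23⟩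
  have m2 : (K₂ \ K₁).card = 2 := by
    have := Finset.card_sdiff_add_card_inter K₂ K₁
    rw [Finset.inter_comm] at this
    omega
  have m3 : (K₃ \ K₁).card = 2 := by
    have := Finset.card_sdiff_add_card_inter K₃ K₁
    rw [Finset.inter_comm] at this
    omega
  obtain ⟨a, b, ab, hab⟩ := Finset.card_eq_two.1 c12
  obtain ⟨c, d, cd, hcd⟩ := Finset.card_eq_two.1 c13
  obtain ⟨p, q, pq, hpq⟩ := Finset.card_eq_two.1 m2
  obtain ⟨r, s, rs, hrs⟩ := Finset.card_eq_two.1 m3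
  have ha : a ∈ K₁ ∩ K₂ := by simp [hab]
  have hb : b ∈ K₁ ∩ K₂ := by simp [hab]
  have hc : c ∈ K₁ ∩ K₃ := by simp [hcd]
  have hd : d ∈ K₁ ∩ K₃ := by simp [hcd]
  have hp : p ∈ K₂ \ K₁ := by simp [hpq]
  have hq : q ∈ K₂ \ K₁ := by simp [hpq]
  have hr : r ∈ K₃ \ K₁ := by simp [hrs]
  have hs : s ∈ K₃ \ K₁ := by simp [hrs]
  rw [Finset.mem_inter] at ha hb hc hd
  rw [Finset.mem_sdiff] at hp hq hr hs
  have D : ∀ x ∈ K₂, ∀ y ∈ K₃, x ≠ y := by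
    rintro x hx y hy rfl
    have : x ∈ K₂ ∩ K₃ := Finset.mem_inter.2 ⟨hx, hy⟩
    rw [c23] at this
    simp at this
  have M : ∀ x ∈ K₁, ∀ y, y ∉ K₁ → y ≠ x := by
    rintro x hx y hy rfl; exact hy hx
  exact geom a b c d p q r s
    (e1 _ ha.1 _ hb.1 ab) (e1 _ ha.1 _ hc.1 (D _ ha.2 _ hc.2)) (e1 _ ha.1 _ hd.1 (D _ ha.2 _ hd.2))
    (e1 _ hb.1 _ hc.1 (D _ hb.2 _ hc.2)) (e1 _ hb.1 _ hd.1 (D _ hb.2 _ hd.2)) (e1 _ hc.1 _ hd.1 cd)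
    (e2 _ hp.1 _ ha.2 (M _ ha.1 _ hp.2)) (e2 _ hp.1 _ hb.2 (M _ hb.1 _ hp.2))
    (e2 _ hq.1 _ ha.2 (M _ ha.1 _ hq.2)) (e2 _ hq.1 _ hb.2 (M _ hb.1 _ hq.2))
    (e2 _ hp.1 _ hq.1 pq)
    (e3 _ hr.1 _ hc.2 (M _ hc.1 _ hr.2)) (e3 _ hr.1 _ hd.2 (M _ hd.1 _ hr.2))
    (e3 _ hs.1 _ hc.2 (M _ hc.1 _ hs.2)) (e3 _ hs.1 _ hd.2 (M _ hd.1 _ hs.2))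
    (e3 _ hr.1 _ hs.1 rs)
    (hdiam _ (s2 hp.1) _ (s1 hc.1)) (hdiam _ (s2 hp.1) _ (s1 hd.1))
    (hdiam _ (s2 hq.1) _ (s1 hc.1)) (hdiam _ (s2 hq.1) _ (s1 hd.1))
    (hdiam _ (s3 hr.1) _ (s1 ha.1)) (hdiam _ (s3 hr.1) _ (s1 hb.1))
    (hdiam _ (s3 hs.1) _ (s1 ha.1)) (hdiam _ (s3 hs.1) _ (s1 hb.1))
    (hdiam _ (s2 hp.1) _ (s3 hr.1)) (hdiam _ (s2 hp.1) _ (s3 hs.1))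
    (hdiam _ (s2 hq.1) _ (s3 hr.1)) (hdiam _ (s2 hq.1) _ (s3 hs.1))
    (M _ hc.1 _ hp.2) (M _ hd.1 _ hp.2) (M _ hc.1 _ hq.2) (M _ hd.1 _ hq.2)
    (M _ ha.1 _ hr.2) (M _ hb.1 _ hr.2) (M _ ha.1 _ hs.2) (M _ hb.1 _ hs.2)
end
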